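/- arXiv:1809.06896 — 8 statements merged into one kernel-verified Lean document; each statement's English description precedes it below -/
import Mathlib

section
/- Let F be a field, V a finite-dimensional F-vector space, G a group acting linearly on V, and G₁, G₂ ≤ G two subgroups. Suppose V = ⊕_{i∈I} V_i is a direct-sum decomposition into nonzero G₁-invariant subspaces each of which is irreducible as a G₁-representation, with the V_i pairwise non-isomorphic as G₁-representations; and suppose V = ⊕_{j∈J} W_j is likewise a decomposition into nonzero, irreducible, pairwise non-isomorphic G₂-invariant subspaces. Form the directed bipartite graph on the vertex set I ⊔ J with an edge from i to j whenever the projection of V_i onto W_j (along ⊕_{j'≠j} W_{j'}) is nonzero, and an edge from j to i whenever the projection of W_j onto V_i (along ⊕_{i'≠i} V_{i'}) is nonzero. If this directed graph is strongly connected, then V is irreducible as a representation of G, i.e. the only G-invariant subspaces of V are 0 and V. -/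
/-!
The key fact is that, when `V = ⨁ A i` with the `A i` irreducible and pairwise non-isomorphic for a
subgroup `H`, an `H`-invariant subspace `U` containing a vector with nonzero `i`-th component
contains all of `A i` (`le_of_component_ne_zero`). To see this, pick, by finite-dimensionality, a
minimal invariant `M ≤ U` on which the projection `π i` is nonzero. If some other `π k` were nonzero
on `M`, then `M ⊓ ker (π k)` would be a proper invariant subspace of `M`, hence killed by `π i`;
irreducibility of `A k` then makes the two kernels on `M` coincide, and `A i ≅ M / kernel ≅ A k`,
which is excluded. So `M ≤ A i`, and `M = A i` by irreducibility.

Applied to both decompositions, this shows that for a `G`-invariant `U` the set of vertices whose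
summand lies in `U` is closed under the edges of the graph. If `U ≠ 0` this set is nonempty, so
strong connectivity makes it everything, and `U = V`.
-/

/-- An isomorphism of `S`-subrepresentations between two invariant subspaces `p` and `q` of a
representation `ρ` of `G` on `V`: an injective linear map `p →ₗ V` with range `q` which
intertwines the `ρ`-action of every element of `S`. -/
def AreIsomorphicSubreps {F V G : Type*} [Field F] [AddCommGroup V] [Module F V] [Group G]
    (ρ : Representation F G V) (S : Set G) (p q : Submodule F V) : Prop :=
  ∃ f : p →ₗ[F] V, Function.Injective f ∧ LinearMap.range f = q ∧
    ∀ g ∈ S, ∀ (v : V) (hv : v ∈ p) (hgv : ρ g v ∈ p),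
      f ⟨ρ g v, hgv⟩ = ρ g (f ⟨v, hv⟩)

/-- The coordinate projections of an internal direct sum, as endomorphisms of `V`, together with
the properties that characterize them. -/
lemma exists_projections {F V : Type*} [Field F] [AddCommGroup V] [Module F V]
    {I : Type*} [DecidableEq I] (A : I → Submodule F V) (hA : DirectSum.IsInternal A) :
    ∃ π : I → V →ₗ[F] V, (∀ i v, π i v ∈ A i) ∧ (∀ i, ∀ v ∈ A i, π i v = v) ∧
      (∀ i k, k ≠ i → ∀ v ∈ A i, π k v = 0) ∧ (∀ v, (∀ i, π i v = 0) → v = 0) := by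
  let e := LinearEquiv.ofBijective (DirectSum.coeLinearMap A) hA
  have he : ∀ i (v : V) (hv : v ∈ A i), e.symm v = DirectSum.lof F I (fun i => A i) i ⟨v, hv⟩ := by
    intro i v hv
    rw [LinearEquiv.symm_apply_eq]
    exact (DirectSum.coeLinearMap_lof A i ⟨v, hv⟩).symm
  refine ⟨fun i => (A i).subtype ∘ₗ DirectSum.component F I (fun i => A i) i ∘ₗ e.symm.toLinearMap,
    fun i v => by simp, ?_, ?_, ?_⟩
  · intro i v hv
    simp [he i v hv, DirectSum.component.lof_self]
  · intro i k hk v hv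
    simp [he i v hv, DirectSum.component.of, hk.symm]
  · intro v h
    have : e.symm v = 0 := by
      refine DFinsupp.ext fun i => ?_
      exact Subtype.ext (h i)
    simpa using this

section

variable {F V G : Type*} [Field F] [AddCommGroup V] [Module F V] [Group G]
  (ρ : Representation F G V) (H : Subgroup G)

/-- Two equivariant maps out of a common invariant subspace `M`, onto `p` and `q`
respectively and with the same kernel, exhibit `p` and `q` as isomorphic. -/
lemma areIsomorphic_of_same_kernel (p q M : Submodule F V) (a b : V →ₗ[F] V)
    (hM : ∀ g ∈ H, ∀ v ∈ M, ρ g v ∈ M)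
    (ha : ∀ g ∈ H, ∀ v, a (ρ g v) = ρ g (a v)) (hb : ∀ g ∈ H, ∀ v, b (ρ g v) = ρ g (b v))
    (hap : M.map a = p) (hbq : M.map b = q) (hk : ∀ v ∈ M, a v = 0 ↔ b v = 0) :
    AreIsomorphicSubreps ρ (H : Set G) p q := by
  have hmem : ∀ v : M, a v ∈ p := fun v => hap ▸ Submodule.mem_map_of_mem v.2
  let a' : M →ₗ[F] p := (a ∘ₗ M.subtype).codRestrict p hmem
  have hsurj : Function.Surjective a' := by
    rintro ⟨x, hx⟩
    rw [← hap] at hx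
    obtain ⟨v, hv, rfl⟩ := hx
    exact ⟨⟨v, hv⟩, rfl⟩
  obtain ⟨s, hs⟩ := a'.exists_rightInverse_of_surjective (LinearMap.range_eq_top.2 hsurj)
  have hs' : ∀ x : p, a (s x) = x := fun x => congrArg Subtype.val (LinearMap.congr_fun hs x)
  let f : p →ₗ[F] V := b ∘ₗ M.subtype ∘ₗ s
  -- `f` is the factorization of `b` through `a`; this determines it.
  have hf : ∀ v (hv : v ∈ M) (hp : a v ∈ p), f ⟨a v, hp⟩ = b v := by
    intro v hv hp
    have h1 : b ((s ⟨a v, hp⟩ : V) - v) = 0 := by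
      refine (hk _ (M.sub_mem (s _).2 hv)).1 ?_
      rw [map_sub, hs', sub_self]
    rw [map_sub, sub_eq_zero] at h1
    exact h1
  refine ⟨f, ?_, ?_, ?_⟩
  · rw [injective_iff_map_eq_zero]
    intro x hx
    have := (hk _ (s x).2).2 hx
    rw [hs'] at this
    exact Subtype.ext this
  · rw [← hbq]
    ext y
    constructor
    · rintro ⟨x, rfl⟩
      exact ⟨s x, (s x).2, rfl⟩
    · rintro ⟨v, hv, rfl⟩
      exact ⟨⟨a v, hmem ⟨v, hv⟩⟩, hf v hv _⟩
  · intro g hg v hv hgv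
    obtain ⟨w, hw, rfl⟩ := hap.symm ▸ hv
    rw [hf w hw hv, ← hb g hg, ← hf _ (hM g hg w hw) (ha g hg w ▸ hgv)]
    congr 2
    exact (ha g hg w).symm

variable [FiniteDimensional F V] {I : Type*} [DecidableEq I] (A : I → Submodule F V)

/-- In a multiplicity-free decomposition, an invariant subspace contains every summand onto which it
projects nontrivially. -/
lemma le_of_component_ne_zero
    (hinv : ∀ i, ∀ g ∈ H, ∀ v ∈ A i, ρ g v ∈ A i)
    (hirr : ∀ i, ∀ U : Submodule F V, U ≤ A i →
      (∀ g ∈ H, ∀ v ∈ U, ρ g v ∈ U) → U = ⊥ ∨ U = A i)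
    (hnoniso : ∀ i i', i ≠ i' → ¬ AreIsomorphicSubreps ρ (H : Set G) (A i) (A i'))
    (htop : ⨆ i, A i = ⊤)
    (π : I → V →ₗ[F] V) (hmem : ∀ i v, π i v ∈ A i) (hself : ∀ i, ∀ v ∈ A i, π i v = v)
    (hother : ∀ i k, k ≠ i → ∀ v ∈ A i, π k v = 0) (hzero : ∀ v, (∀ i, π i v = 0) → v = 0)
    (U : Submodule F V) (hU : ∀ g ∈ H, ∀ v ∈ U, ρ g v ∈ U)
    (i : I) (u : V) (hu : u ∈ U) (hne : π i u ≠ 0) : A i ≤ U := by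
  have hequiv : ∀ k, ∀ g ∈ H, ∀ v, π k (ρ g v) = ρ g (π k v) := by
    intro k g hg v
    have hv : v ∈ ⨆ i, A i := htop ▸ Submodule.mem_top
    induction hv using Submodule.iSup_induction' with
    | mem l x hx =>
      by_cases h : k = l
      · subst h
        rw [hself k x hx, hself k _ (hinv k g hg x hx)]
      · rw [hother l k h x hx, hother l k h _ (hinv l g hg x hx), map_zero]
    | zero => simp
    | add x y _ _ hx hy => simp only [map_add, hx, hy]
  -- Images under `π k` of invariant subspaces are zero or all of `A k`.
  have himg : ∀ k (N : Submodule F V), (∀ g ∈ H, ∀ v ∈ N, ρ g v ∈ N) →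
      (∃ v ∈ N, π k v ≠ 0) → N.map (π k) = A k := by
    rintro k N hN ⟨v, hv, hv0⟩
    refine (hirr k (N.map (π k)) ?_ ?_).resolve_left ?_
    · rintro _ ⟨w, -, rfl⟩
      exact hmem k w
    · rintro g hg _ ⟨w, hw, rfl⟩
      exact ⟨ρ g w, hN g hg w hw, hequiv k g hg w⟩
    · intro h
      exact hv0 ((Submodule.mem_bot F).1 (h ▸ Submodule.mem_map_of_mem hv))
  have hker : ∀ k (N : Submodule F V), (∀ g ∈ H, ∀ v ∈ N, ρ g v ∈ N) →
      ∀ g ∈ H, ∀ v ∈ N ⊓ LinearMap.ker (π k), ρ g v ∈ N ⊓ LinearMap.ker (π k) := by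
    rintro k N hN g hg v ⟨hv, hv0⟩
    refine ⟨hN g hg v hv, ?_⟩
    rw [SetLike.mem_coe, LinearMap.mem_ker] at hv0 ⊢
    rw [hequiv k g hg, hv0, map_zero]
  let S : Set (Submodule F V) :=
    {N | N ≤ U ∧ (∀ g ∈ H, ∀ v ∈ N, ρ g v ∈ N) ∧ ∃ v ∈ N, π i v ≠ 0}
  obtain ⟨M, ⟨hMU, hM, w, hw, hw0⟩, hmin⟩ :=
    WellFounded.has_min (wellFounded_lt (α := Submodule F V)) S ⟨U, le_rfl, hU, u, hu, hne⟩
  have hvanish : ∀ k, k ≠ i → ∀ v ∈ M, π k v = 0 := by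
    intro k hki
    by_contra! hcon
    obtain ⟨x, hx, hx0⟩ := hcon
    -- Minimality of `M`, applied to the kernel of `π k` on `M`.
    have h1 : ∀ v ∈ M, π k v = 0 → π i v = 0 := by
      intro v hv hv0
      by_contra hvi
      refine hmin (M ⊓ LinearMap.ker (π k))
        ⟨inf_le_left.trans hMU, hker k M hM, v, ⟨hv, hv0⟩, hvi⟩ ?_
      refine lt_of_le_of_ne inf_le_left fun h => hx0 ?_
      have : x ∈ M ⊓ LinearMap.ker (π k) := h.symm ▸ hx
      exact this.2
    -- Irreducibility of `A k`, applied to the image under `π k` of the kernel of `π i` on `M`.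
    have h2 : ∀ v ∈ M, π i v = 0 → π k v = 0 := by
      intro v hv hv0
      by_contra hvk
      have hfull := himg k _ (hker i M hM) ⟨v, ⟨hv, hv0⟩, hvk⟩
      obtain ⟨y, ⟨hyM, hy0⟩, hy⟩ : π k w ∈ (M ⊓ LinearMap.ker (π i)).map (π k) :=
        hfull.symm ▸ hmem k w
      have h3 := h1 (w - y) (M.sub_mem hw hyM) (by rw [map_sub, hy, sub_self])
      rw [map_sub, LinearMap.mem_ker.1 hy0, sub_zero] at h3
      exact hw0 h3
    exact hnoniso i k hki.symm (areIsomorphic_of_same_kernel ρ H (A i) (A k) M (π i) (π k) hM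
      (hequiv i) (hequiv k) (himg i M hM ⟨w, hw, hw0⟩) (himg k M hM ⟨x, hx, hx0⟩)
      fun v hv => ⟨h2 v hv, h1 v hv⟩)
  have hMA : M ≤ A i := by
    intro v hv
    have : v - π i v = 0 := by
      refine hzero _ fun k => ?_
      by_cases h : k = i
      · subst h
        rw [map_sub, hself k _ (hmem k v), sub_self]
      · rw [map_sub, hvanish k h v hv, hother i k h _ (hmem i v), sub_self]
    rw [sub_eq_zero.1 this]
    exact hmem i v
  rcases hirr i M hMA hM with h | h
  · subst h
    rw [(Submodule.mem_bot F).1 hw, map_zero] at hw0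
    exact absurd rfl hw0
  · exact h ▸ hMU

/-- The two consequences used for each of the decompositions: a nonzero invariant subspace contains
some summand, and it contains every summand `A i` onto which a subspace `B` of it projects
nontrivially, the latter being expressed as in the definition of the edges of the graph. -/
lemma invariant_contains_summands (hA : DirectSum.IsInternal A)
    (hinv : ∀ i, ∀ g ∈ H, ∀ v ∈ A i, ρ g v ∈ A i)
    (hirr : ∀ i, ∀ U : Submodule F V, U ≤ A i →
      (∀ g ∈ H, ∀ v ∈ U, ρ g v ∈ U) → U = ⊥ ∨ U = A i)
    (hnoniso : ∀ i i', i ≠ i' → ¬ AreIsomorphicSubreps ρ (H : Set G) (A i) (A i'))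
    (U : Submodule F V) (hU : ∀ g ∈ H, ∀ v ∈ U, ρ g v ∈ U) :
    (U ≠ ⊥ → ∃ i, A i ≤ U) ∧
      ∀ B ≤ U, ∀ i, ¬ B ≤ ⨆ i' ∈ {i' | i' ≠ i}, A i' → A i ≤ U := by
  have htop := hA.submodule_iSup_eq_top
  obtain ⟨π, hmem, hself, hother, hzero⟩ := exists_projections A hA
  have key := le_of_component_ne_zero ρ H A hinv hirr hnoniso htop π hmem hself hother hzero U hU
  refine ⟨fun hne => ?_, fun B hB i hi => ?_⟩
  · obtain ⟨u, hu, hu0⟩ := U.ne_bot_iff.1 hne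
    by_contra! hcon
    exact hu0 (hzero u fun i => by_contra fun h => hcon i (key i u hu h))
  · obtain ⟨v, hvB, hv⟩ := SetLike.not_le_iff_exists.1 hi
    refine key i v (hB hvB) fun h0 => hv ?_
    have hsub : ∀ v, v - π i v ∈ ⨆ i' ∈ {i' | i' ≠ i}, A i' := by
      intro v
      have hv : v ∈ ⨆ i, A i := htop ▸ Submodule.mem_top
      induction hv using Submodule.iSup_induction' with
      | mem l x hx =>
        by_cases h : l = i
        · subst h
          rw [hself l x hx, sub_self]
          exact Submodule.zero_mem _
        · rw [hother l i (Ne.symm h) x hx, sub_zero]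
          exact Submodule.mem_iSup_of_mem l (Submodule.mem_iSup_of_mem h hx)
      | zero => simp
      | add x y _ _ hx hy =>
        rw [map_add, add_sub_add_comm]
        exact Submodule.add_mem _ hx hy
    simpa [h0] using hsub v

end

theorem stmt0 {F V G : Type*} [Field F] [AddCommGroup V] [Module F V]
    [FiniteDimensional F V] [Group G]
    (ρ : Representation F G V) (G₁ G₂ : Subgroup G) {I J : Type*} [DecidableEq I] [DecidableEq J]
    (Vfam : I → Submodule F V) (Wfam : J → Submodule F V)
    (hVint : DirectSum.IsInternal Vfam) (hWint : DirectSum.IsInternal Wfam)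
    -- the `Vfam i` are nonzero `G₁`-invariant and the `Wfam j` are nonzero `G₂`-invariant
    (hVne : ∀ i, Vfam i ≠ ⊥) (hWne : ∀ j, Wfam j ≠ ⊥)
    (hVinv : ∀ i, ∀ g ∈ G₁, ∀ v ∈ Vfam i, ρ g v ∈ Vfam i)
    (hWinv : ∀ j, ∀ g ∈ G₂, ∀ v ∈ Wfam j, ρ g v ∈ Wfam j)
    -- each `Vfam i` is irreducible as a `G₁`-representation, each `Wfam j` as a `G₂`-rep.
    (hVirr : ∀ i, ∀ U : Submodule F V, U ≤ Vfam i →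
      (∀ g ∈ G₁, ∀ v ∈ U, ρ g v ∈ U) → U = ⊥ ∨ U = Vfam i)
    (hWirr : ∀ j, ∀ U : Submodule F V, U ≤ Wfam j →
      (∀ g ∈ G₂, ∀ v ∈ U, ρ g v ∈ U) → U = ⊥ ∨ U = Wfam j)
    -- pairwise non-isomorphic
    (hVnoniso : ∀ i i', i ≠ i' →
      ¬ AreIsomorphicSubreps ρ (G₁ : Set G) (Vfam i) (Vfam i'))
    (hWnoniso : ∀ j j', j ≠ j' →
      ¬ AreIsomorphicSubreps ρ (G₂ : Set G) (Wfam j) (Wfam j'))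
    -- the directed bipartite graph: there is an edge `i → j` iff the projection of `Vfam i`
    -- onto `Wfam j` along the other `Wfam j'` is nonzero, i.e. iff `Vfam i` is not contained
    -- in `⨆ j' ≠ j, Wfam j'`; similarly for edges `j → i`.
    (Edge : I ⊕ J → I ⊕ J → Prop)
    (hEdge : ∀ x y, Edge x y ↔
      ((∃ i j, x = Sum.inl i ∧ y = Sum.inr j ∧
          ¬ Vfam i ≤ ⨆ j' ∈ {j' | j' ≠ j}, Wfam j') ∨
       (∃ j i, x = Sum.inr j ∧ y = Sum.inl i ∧
          ¬ Wfam j ≤ ⨆ i' ∈ {i' | i' ≠ i}, Vfam i')))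
    -- strong connectivity
    (hconn : ∀ x y : I ⊕ J, Relation.ReflTransGen Edge x y) :
    -- conclusion: `V` is irreducible as a `G`-representation
    ∀ U : Submodule F V, (∀ g : G, ∀ v ∈ U, ρ g v ∈ U) → U = ⊥ ∨ U = ⊤ := by
  intro U hU
  obtain ⟨hV0, hV⟩ := invariant_contains_summands ρ G₁ Vfam hVint hVinv hVirr hVnoniso U
    fun g _ => hU g
  obtain ⟨-, hW⟩ := invariant_contains_summands ρ G₂ Wfam hWint hWinv hWirr hWnoniso U
    fun g _ => hU g
  by_cases hbot : U = ⊥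
  · exact Or.inl hbot
  right
  obtain ⟨i₀, hi₀⟩ := hV0 hbot
  -- The set of vertices whose summand lies in `U` is closed under following edges.
  have hreach : ∀ y, Relation.ReflTransGen Edge (Sum.inl i₀) y → Sum.elim Vfam Wfam y ≤ U := by
    intro y hy
    induction hy with
    | refl => exact hi₀
    | tail _ hedge ih =>
      rcases (hEdge _ _).1 hedge with ⟨i, j, rfl, rfl, h⟩ | ⟨j, i, rfl, rfl, h⟩
      · exact hW _ ih j h
      · exact hV _ ih i h
  rw [eq_top_iff, ← hVint.submodule_iSup_eq_top]
  exact iSup_le fun i => hreach (Sum.inl i) (hconn _ _)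
end

section
/- Let V be a finite-dimensional complex vector space equipped with a nondegenerate Hermitian sesquilinear form ⟨·,·⟩, let G be a group acting linearly on V, and let G₁, G₂ ≤ G be subgroups. Suppose V = ⊕_{i∈I} V_i is a direct-sum decomposition into nonzero, pairwise orthogonal G₁-invariant subspaces, each irreducible as a G₁-representation, with the V_i pairwise non-isomorphic as G₁-representations; and suppose V = ⊕_{j∈J} W_j is likewise a decomposition into nonzero, pairwise orthogonal, irreducible, pairwise non-isomorphic G₂-invariant subspaces. Form the undirected bipartite graph on I ⊔ J with an edge joining i ∈ I and j ∈ J whenever there exist v ∈ V_i and w ∈ W_j with ⟨v,w⟩ ≠ 0. If this graph is connected, then V is irreducible as a representation of G. -/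
/-!
Let `U ≤ V` be `G`-invariant. The point is that a `G₁`-invariant subspace of a multiplicity-free
sum of irreducibles either contains a given summand `V_i` or has zero projection to it
(`le_or_proj_eq_zero`); as the summands are pairwise orthogonal, in the second case `U ⟂ V_i`.
The same dichotomy holds for `G₂` and the `W_j`. If `V_i ≤ U` and `i` is joined to `j`,
then `W_j` is not orthogonal to `U`, so `W_j ≤ U`, and likewise with the roles exchanged. By
connectedness, either all summands lie in `U`, and `U = V`, or all are orthogonal to `U`, and
`U = 0` by nondegeneracy.

For the dichotomy: a nonzero invariant subspace of minimal dimension meets the kernel of each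
projection trivially or entirely, so it maps isomorphically onto every summand to which it
projects nontrivially. There is only one such summand, the summands being pairwise
non-isomorphic, so the subspace is equal to it. Hence every nonzero invariant `U` contains some
summand `V_k`, and one proceeds by induction with `U ∩ ker p_k`.
-/

/-- The projections `p i` onto the summands of an internal direct sum, commuting with every
endomorphism that preserves all summands. -/
lemma exists_proj {V I : Type*} [AddCommGroup V] [Module ℂ V] [DecidableEq I]
    (F : I → Submodule ℂ V) (hF : DirectSum.IsInternal F) :
    ∃ p : I → V →ₗ[ℂ] V, (∀ i v, p i v ∈ F i) ∧ (∀ i, ∀ v ∈ F i, p i v = v) ∧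
      (∀ i k, i ≠ k → ∀ v ∈ F k, p i v = 0) ∧ (∀ v, (∀ i, p i v = 0) → v = 0) ∧
      (∀ T : V →ₗ[ℂ] V, (∀ i, ∀ v ∈ F i, T v ∈ F i) → ∀ i v, p i (T v) = T (p i v)) := by
  let e := LinearEquiv.ofBijective (DirectSum.coeLinearMap F) hF
  have he : ∀ i (v : V) (hv : v ∈ F i), e.symm v = DirectSum.lof ℂ I (fun i => F i) i ⟨v, hv⟩ := by
    intro i v hv
    rw [LinearEquiv.symm_apply_eq]
    exact (DirectSum.coeLinearMap_lof F i ⟨v, hv⟩).symm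
  let p : I → V →ₗ[ℂ] V := fun i =>
    (F i).subtype ∘ₗ DirectSum.component ℂ I (fun i => F i) i ∘ₗ e.symm.toLinearMap
  have hp : ∀ i v, p i v = (e.symm v i : V) := fun i v => rfl
  have h1 : ∀ i, ∀ v ∈ F i, p i v = v := by
    intro i v hv
    rw [hp, he i v hv, DirectSum.lof_eq_of, DirectSum.of_eq_same]
  have h2 : ∀ i k, i ≠ k → ∀ v ∈ F k, p i v = 0 := by
    intro i k hik v hv
    rw [hp, he k v hv, DirectSum.lof_eq_of, DirectSum.of_eq_of_ne _ _ _ hik]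
    rfl
  refine ⟨p, fun i v => by rw [hp]; exact Subtype.property _, h1, h2, ?_, ?_⟩
  · intro v hv
    have : e.symm v = 0 := by
      ext i
      exact hv i
    simpa using this
  · intro T hT i v
    have hv : v ∈ ⨆ i, F i := by rw [hF.submodule_iSup_eq_top]; trivial
    induction hv using Submodule.iSup_induction' with
    | mem k x hx =>
      by_cases hik : i = k
      · subst hik
        rw [h1 i x hx, h1 i _ (hT i x hx)]
      · rw [h2 i k hik x hx, h2 i k hik _ (hT k x hx), map_zero]
    | zero => simp
    | add x y _ _ hx hy => simp [hx, hy]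

section Dichotomy

variable {V G : Type*} [AddCommGroup V] [Module ℂ V] [FiniteDimensional ℂ V] [Group G]
  (ρ : Representation ℂ G V) (H : Subgroup G) {I : Type*} (F : I → Submodule ℂ V)
  (hFirr : ∀ i, ∀ U : Submodule ℂ V, U ≤ F i →
    (∀ g ∈ H, ∀ v ∈ U, ρ g v ∈ U) → U = ⊥ ∨ U = F i)
  (hFnoniso : ∀ i i', i ≠ i' →
    ¬ ∃ f : (F i) →ₗ[ℂ] V, Function.Injective f ∧ LinearMap.range f = F i' ∧
      ∀ g ∈ H, ∀ (v : V) (hv : v ∈ F i) (hgv : ρ g v ∈ F i),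
        f ⟨ρ g v, hgv⟩ = ρ g (f ⟨v, hv⟩))
  (p : I → V →ₗ[ℂ] V) (hpm : ∀ i v, p i v ∈ F i) (hp1 : ∀ i, ∀ v ∈ F i, p i v = v)
  (hp2 : ∀ i k, i ≠ k → ∀ v ∈ F k, p i v = 0) (hp0 : ∀ v, (∀ i, p i v = 0) → v = 0)
  (hpc : ∀ g ∈ H, ∀ i v, p i (ρ g v) = ρ g (p i v))

include hFirr hpm hpc in
omit [FiniteDimensional ℂ V] in
/-- Schur-type step: a nonzero projection of an invariant subspace is a whole summand. -/
lemma map_proj_eq (U : Submodule ℂ V) (hU : ∀ g ∈ H, ∀ v ∈ U, ρ g v ∈ U) (i : I)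
    (hne : ∃ u ∈ U, p i u ≠ 0) : U.map (p i) = F i := by
  obtain ⟨u, hu, hne⟩ := hne
  refine (hFirr i (U.map (p i)) ?_ ?_).resolve_left ?_
  · rintro _ ⟨v, -, rfl⟩
    exact hpm i v
  · rintro g hg _ ⟨v, hv, rfl⟩
    exact ⟨ρ g v, hU g hg v hv, hpc g hg i v⟩
  · intro h
    exact hne ((Submodule.eq_bot_iff _).1 h _ ⟨u, hu, rfl⟩)

include hFirr hFnoniso hpm hpc in
omit [FiniteDimensional ℂ V] in
/-- An invariant subspace cannot project injectively to two different summands `F i`, `F k`, since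
it would identify them. -/
lemma not_two_injective (U : Submodule ℂ V) (hU : ∀ g ∈ H, ∀ v ∈ U, ρ g v ∈ U) (i k : I)
    (hik : i ≠ k) (hi : ∃ u ∈ U, p i u ≠ 0) (hk : ∃ u ∈ U, p k u ≠ 0)
    (hii : ∀ u ∈ U, p i u = 0 → u = 0) (hki : ∀ u ∈ U, p k u = 0 → u = 0) : False := by
  have mi := map_proj_eq ρ H F hFirr p hpm hpc U hU i hi
  have mk := map_proj_eq ρ H F hFirr p hpm hpc U hU k hk
  let q : U →ₗ[ℂ] F i := ((p i).domRestrict U).codRestrict (F i) fun u => hpm i u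
  have hq : Function.Bijective q := by
    constructor
    · rw [injective_iff_map_eq_zero]
      intro u hu
      exact Subtype.ext (hii u u.2 (congrArg Subtype.val hu))
    · rintro ⟨v, hv⟩
      rw [← mi] at hv
      obtain ⟨u, hu, rfl⟩ := hv
      exact ⟨⟨u, hu⟩, rfl⟩
  let e := LinearEquiv.ofBijective q hq
  have hki' : Function.Injective ((p k).domRestrict U) := by
    rw [injective_iff_map_eq_zero]
    intro u hu
    exact Subtype.ext (hki u u.2 hu)
  refine hFnoniso i k hik ⟨(p k).domRestrict U ∘ₗ e.symm.toLinearMap, ?_, ?_, ?_⟩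
  · exact hki'.comp e.symm.injective
  · rw [LinearMap.range_comp, LinearEquiv.range, Submodule.map_top, ← mk]
    ext x
    simp
  · intro g hg v hv hgv
    obtain ⟨u, hu⟩ := e.surjective ⟨v, hv⟩
    have hu' : p i u = v := congrArg Subtype.val hu
    have hgu : e ⟨ρ g u, hU g hg u u.2⟩ = ⟨ρ g v, hgv⟩ := by
      apply Subtype.ext
      change p i (ρ g u) = ρ g v
      rw [hpc g hg, hu']
    rw [← hu, ← hgu]
    simpa using hpc g hg k u

include hFirr hFnoniso hpm hp1 hp2 hp0 hpc in
/-- A nonzero invariant subspace contains a summand. The extra conclusion `p k u ≠ 0` makes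
`U ⊓ ker (p k)` strictly smaller than `U`. -/
lemma exists_le (n : ℕ) : ∀ (U : Submodule ℂ V), Module.finrank ℂ U = n →
    (∀ g ∈ H, ∀ v ∈ U, ρ g v ∈ U) → U ≠ ⊥ → ∃ k, F k ≤ U ∧ ∃ u ∈ U, p k u ≠ 0 := by
  induction n using Nat.strong_induction_on with
  | _ n ih =>
  intro U hn hU hne
  by_cases hker : ∃ i, (∃ u ∈ U, p i u ≠ 0) ∧ ∃ u ∈ U, p i u = 0 ∧ u ≠ 0
  · obtain ⟨i, ⟨u, hu, hpu⟩, w, hw, hpw, hw0⟩ := hker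
    have hlt : U ⊓ LinearMap.ker (p i) < U :=
      lt_of_le_of_ne inf_le_left fun h => hpu (inf_eq_left.1 h hu)
    obtain ⟨k, hk, x, hx, hpx⟩ := ih _ (hn ▸ Submodule.finrank_lt_finrank_of_lt hlt)
      (U ⊓ LinearMap.ker (p i)) rfl
      (fun g hg v hv => ⟨hU g hg v hv.1, by
        have : p i v = 0 := hv.2
        simp [hpc g hg, this]⟩)
      (fun h => hw0 ((Submodule.eq_bot_iff _).1 h w ⟨hw, hpw⟩))
    exact ⟨k, hk.trans inf_le_left, x, hx.1, hpx⟩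
  · push Not at hker
    obtain ⟨u, hu, hu0⟩ := (Submodule.ne_bot_iff _).1 hne
    have : ∃ i, p i u ≠ 0 := by
      by_contra! h
      exact hu0 (hp0 u h)
    obtain ⟨i, hi⟩ := this
    have hother : ∀ k, k ≠ i → ∀ v ∈ U, p k v = 0 := by
      by_contra! h
      obtain ⟨k, hki, v, hv, hpv⟩ := h
      exact not_two_injective ρ H F hFirr hFnoniso p hpm hpc U hU k i hki ⟨v, hv, hpv⟩
        ⟨u, hu, hi⟩ (hker k ⟨v, hv, hpv⟩) (hker i ⟨u, hu, hi⟩)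
    -- Only the projection to `F i` is nonzero on `U`, so it is the identity there.
    have hid : ∀ v ∈ U, p i v = v := by
      intro v hv
      refine (sub_eq_zero.1 (hp0 (v - p i v) fun k => ?_)).symm
      by_cases hki : k = i
      · subst hki
        rw [map_sub, hp1 k _ (hpm k v), sub_self]
      · rw [map_sub, hother k hki v hv, hp2 k i hki _ (hpm i v), sub_self]
    refine ⟨i, ?_, u, hu, hi⟩
    rw [← map_proj_eq ρ H F hFirr p hpm hpc U hU i ⟨u, hu, hi⟩]
    rintro _ ⟨v, hv, rfl⟩
    rw [hid v hv]
    exact hv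

include hFirr hFnoniso hpm hp1 hp2 hp0 hpc in
/-- The dichotomy, by induction on `finrank U`: split off a summand `F k ≤ U` and pass to
`U ⊓ ker (p k)`. -/
lemma le_or_proj_eq_zero (n : ℕ) : ∀ (U : Submodule ℂ V), Module.finrank ℂ U = n →
    (∀ g ∈ H, ∀ v ∈ U, ρ g v ∈ U) → ∀ i, F i ≤ U ∨ ∀ u ∈ U, p i u = 0 := by
  induction n using Nat.strong_induction_on with
  | _ n ih =>
  intro U hn hU i
  by_cases hne : U = ⊥
  · right
    rintro u hu
    rw [hne, Submodule.mem_bot] at hu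
    simp [hu]
  obtain ⟨k, hk, u, hu, hpu⟩ :=
    exists_le ρ H F hFirr hFnoniso p hpm hp1 hp2 hp0 hpc _ U rfl hU hne
  by_cases hik : i = k
  · exact Or.inl (hik ▸ hk)
  have hlt : U ⊓ LinearMap.ker (p k) < U :=
    lt_of_le_of_ne inf_le_left fun h => hpu (inf_eq_left.1 h hu)
  rcases ih _ (hn ▸ Submodule.finrank_lt_finrank_of_lt hlt) (U ⊓ LinearMap.ker (p k)) rfl
      (fun g hg v hv => ⟨hU g hg v hv.1, by
        have : p k v = 0 := hv.2
        simp [hpc g hg, this]⟩) i with h | h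
  · exact Or.inl (h.trans inf_le_left)
  · right
    intro v hv
    -- `v - p k v` lies in `U ∩ ker p k` because `F k ≤ U`.
    have := h (v - p k v) ⟨U.sub_mem hv (hk (hpm k v)), by
      simp [hp1 k _ (hpm k v)]⟩
    rwa [map_sub, hp2 i k hik _ (hpm k v), sub_zero] at this

end Dichotomy

/-- Dichotomy for a multiplicity-free orthogonal decomposition: an invariant subspace contains a
given summand or is orthogonal to it. -/
lemma le_or_orthogonal {V G : Type*} [AddCommGroup V] [Module ℂ V] [FiniteDimensional ℂ V]
    [Group G] (ρ : Representation ℂ G V) (B : V →ₗ⋆[ℂ] V →ₗ[ℂ] ℂ)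
    (H : Subgroup G) {I : Type*} [DecidableEq I] (F : I → Submodule ℂ V)
    (hF : DirectSum.IsInternal F)
    (hForth : ∀ i i', i ≠ i' → ∀ v ∈ F i, ∀ w ∈ F i', B v w = 0)
    (hFinv : ∀ i, ∀ g ∈ H, ∀ v ∈ F i, ρ g v ∈ F i)
    (hFirr : ∀ i, ∀ U : Submodule ℂ V, U ≤ F i →
      (∀ g ∈ H, ∀ v ∈ U, ρ g v ∈ U) → U = ⊥ ∨ U = F i)
    (hFnoniso : ∀ i i', i ≠ i' →
      ¬ ∃ f : (F i) →ₗ[ℂ] V, Function.Injective f ∧ LinearMap.range f = F i' ∧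
        ∀ g ∈ H, ∀ (v : V) (hv : v ∈ F i) (hgv : ρ g v ∈ F i),
          f ⟨ρ g v, hgv⟩ = ρ g (f ⟨v, hv⟩))
    (U : Submodule ℂ V) (hU : ∀ g ∈ H, ∀ v ∈ U, ρ g v ∈ U) (i : I) :
    F i ≤ U ∨ ∀ u ∈ U, ∀ v ∈ F i, B u v = 0 := by
  obtain ⟨p, hpm, hp1, hp2, hp0, hpc⟩ := exists_proj F hF
  refine (le_or_proj_eq_zero ρ H F hFirr hFnoniso p hpm hp1 hp2 hp0
    (fun g hg => hpc (ρ g) fun i => hFinv i g hg) _ U rfl hU i).imp_right fun h u hu v hv => ?_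
  have key : B u v = B (p i u) v := by
    have hm : u ∈ ⨆ i, F i := by rw [hF.submodule_iSup_eq_top]; trivial
    clear hu
    induction hm using Submodule.iSup_induction' with
    | mem k x hx =>
      by_cases hik : i = k
      · subst hik
        rw [hp1 i x hx]
      · rw [hp2 i k hik x hx, hForth k i (Ne.symm hik) x hx v hv]
        simp
    | zero => simp
    | add x y _ _ hx hy => simp [hx, hy]
  rw [key, h u hu]
  simp


theorem stmt1 {V G : Type*} [AddCommGroup V] [Module ℂ V] [FiniteDimensional ℂ V] [Group G]
    (ρ : Representation ℂ G V)
    -- a nondegenerate Hermitian sesquilinear form on `V`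
    (B : V →ₗ⋆[ℂ] V →ₗ[ℂ] ℂ)
    (hherm : ∀ v w : V, B w v = starRingEnd ℂ (B v w))
    (hnondeg : ∀ v : V, (∀ w : V, B v w = 0) → v = 0)
    (G₁ G₂ : Subgroup G) {I J : Type*} [DecidableEq I] [DecidableEq J]
    (Vfam : I → Submodule ℂ V) (Wfam : J → Submodule ℂ V)
    (hVint : DirectSum.IsInternal Vfam) (hWint : DirectSum.IsInternal Wfam)
    -- nonzero
    (hVne : ∀ i, Vfam i ≠ ⊥) (hWne : ∀ j, Wfam j ≠ ⊥)
    -- pairwise orthogonal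
    (hVorth : ∀ i i', i ≠ i' → ∀ v ∈ Vfam i, ∀ w ∈ Vfam i', B v w = 0)
    (hWorth : ∀ j j', j ≠ j' → ∀ v ∈ Wfam j, ∀ w ∈ Wfam j', B v w = 0)
    -- invariance
    (hVinv : ∀ i, ∀ g ∈ G₁, ∀ v ∈ Vfam i, ρ g v ∈ Vfam i)
    (hWinv : ∀ j, ∀ g ∈ G₂, ∀ v ∈ Wfam j, ρ g v ∈ Wfam j)
    -- irreducibility of each summand
    (hVirr : ∀ i, ∀ U : Submodule ℂ V, U ≤ Vfam i →
      (∀ g ∈ G₁, ∀ v ∈ U, ρ g v ∈ U) → U = ⊥ ∨ U = Vfam i)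
    (hWirr : ∀ j, ∀ U : Submodule ℂ V, U ≤ Wfam j →
      (∀ g ∈ G₂, ∀ v ∈ U, ρ g v ∈ U) → U = ⊥ ∨ U = Wfam j)
    -- pairwise non-isomorphic as subrepresentations
    (hVnoniso : ∀ i i', i ≠ i' →
      ¬ ∃ f : (Vfam i) →ₗ[ℂ] V, Function.Injective f ∧ LinearMap.range f = Vfam i' ∧
        ∀ g ∈ G₁, ∀ (v : V) (hv : v ∈ Vfam i) (hgv : ρ g v ∈ Vfam i),
          f ⟨ρ g v, hgv⟩ = ρ g (f ⟨v, hv⟩))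
    (hWnoniso : ∀ j j', j ≠ j' →
      ¬ ∃ f : (Wfam j) →ₗ[ℂ] V, Function.Injective f ∧ LinearMap.range f = Wfam j' ∧
        ∀ g ∈ G₂, ∀ (v : V) (hv : v ∈ Wfam j) (hgv : ρ g v ∈ Wfam j),
          f ⟨ρ g v, hgv⟩ = ρ g (f ⟨v, hv⟩))
    -- the undirected bipartite graph: an edge joins `i ∈ I` and `j ∈ J` iff there are
    -- `v ∈ Vfam i` and `w ∈ Wfam j` with `B v w ≠ 0`
    (Edge : I ⊕ J → I ⊕ J → Prop)
    (hEdge : ∀ x y, Edge x y ↔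
      ((∃ i j, x = Sum.inl i ∧ y = Sum.inr j ∧
          ∃ v ∈ Vfam i, ∃ w ∈ Wfam j, B v w ≠ 0) ∨
       (∃ j i, x = Sum.inr j ∧ y = Sum.inl i ∧
          ∃ v ∈ Vfam i, ∃ w ∈ Wfam j, B v w ≠ 0)))
    -- connectivity
    (hconn : ∀ x y : I ⊕ J, Relation.ReflTransGen Edge x y) :
    -- conclusion: `V` is irreducible as a `G`-representation
    ∀ U : Submodule ℂ V, (∀ g : G, ∀ v ∈ U, ρ g v ∈ U) → U = ⊥ ∨ U = ⊤ := by
  intro U hU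
  have dV := le_or_orthogonal ρ B G₁ Vfam hVint hVorth hVinv hVirr hVnoniso U
    fun g _ => hU g
  have dW := le_or_orthogonal ρ B G₂ Wfam hWint hWorth hWinv hWirr hWnoniso U
    fun g _ => hU g
  let S : I ⊕ J → Submodule ℂ V := Sum.elim Vfam Wfam
  have step : ∀ x y, Edge x y → S x ≤ U → S y ≤ U := by
    intro x y hxy hx
    rcases (hEdge x y).1 hxy with ⟨i, j, rfl, rfl, v, hv, w, hw, hB⟩ | ⟨j, i, rfl, rfl, v, hv, w, hw, hB⟩
    · exact (dW j).resolve_right fun h => hB (h v (hx hv) w hw)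
    · refine (dV i).resolve_right fun h => hB ?_
      rw [hherm w v, h w (hx hw) v hv, map_zero]
  by_cases hex : ∃ x, S x ≤ U
  · obtain ⟨x, hx⟩ := hex
    have hall : ∀ y, S y ≤ U := by
      intro y
      induction hconn x y with
      | refl => exact hx
      | tail _ hbc ih => exact step _ _ hbc ih
    right
    rw [eq_top_iff, ← hVint.submodule_iSup_eq_top]
    exact iSup_le fun i => hall (Sum.inl i)
  · push Not at hex
    left
    rw [Submodule.eq_bot_iff]
    intro u hu
    refine hnondeg u fun w => ?_
    have hm : w ∈ ⨆ i, Vfam i := by rw [hVint.submodule_iSup_eq_top]; trivial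
    induction hm using Submodule.iSup_induction' with
    | mem k x hx => exact (dV k).resolve_left (hex (Sum.inl k)) u hu x hx
    | zero => simp
    | add x y _ _ hx hy => simp [hx, hy]
end

section
/- Let 𝔤₁, 𝔤₂, …, 𝔤_l be finite-dimensional simple Lie algebras over a field K that are pairwise non-isomorphic as Lie algebras, and let 𝔥 be a Lie subalgebra of the direct product 𝔤 = 𝔤₁ × 𝔤₂ × ⋯ × 𝔤_l such that for every k the projection 𝔥 → 𝔤_k is surjective. Then 𝔥 = 𝔤. -/
/-!
For `k` let `f k : H → L k` be the (surjective) projection. As `L k` is simple, an ideal of `H` is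
either contained in `ker (f k)` or mapped by `f k` onto `L k` (`le_ker_or_forall_exists`). Two
consequences make a Chinese remainder argument work:

* `ker (f j) ≤ ker (f k)` forces the two kernels to be equal, so that `L j` and `L k` are both
  isomorphic to the same quotient of `H` (`nonempty_equiv_of_ker_le`); for `j ≠ k` this is excluded;
* `ker (f k)` is prime with respect to intersections of ideals, because `L k` is not abelian
  (`le_ker_or_le_ker_of_inf_le`).

Hence a finite intersection of kernels `ker (f j)`, `j ∈ S`, is contained in `ker (f k)` only if
`k ∈ S`. Taking for `S` all indices other than `k`, the ideal of those elements of `H` whose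
coordinates vanish outside `k` is mapped onto `L k`, so `H` contains every summand.
-/

section Goursat

variable {K M L₁ L₂ : Type*} [Field K] [LieRing M] [LieAlgebra K M]
  [LieRing L₁] [LieAlgebra K L₁] [LieRing L₂] [LieAlgebra K L₂]

theorem le_ker_or_forall_exists (hs : LieAlgebra.IsSimple K L₁) (f : M →ₗ⁅K⁆ L₁)
    (hf : Function.Surjective f) (J : LieIdeal K M) :
    J ≤ f.ker ∨ ∀ x, ∃ y ∈ J, f y = x := by
  rcases hs.eq_bot_or_eq_top (J.map f) with h | h
  · left
    exact LieIdeal.map_eq_bot_iff.mp h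
  · right
    intro x
    have hx : x ∈ J.map f := h ▸ LieSubmodule.mem_top x
    obtain ⟨y, hy⟩ := LieIdeal.mem_map_of_surjective hf hx
    exact ⟨y, y.2, hy⟩

theorem nonempty_quotient_equiv (f : M →ₗ⁅K⁆ L₁) (hf : Function.Surjective f)
    (I : LieIdeal K M) (hI : f.ker = I) : Nonempty ((M ⧸ I) ≃ₗ⁅K⁆ L₁) := by
  subst hI
  refine ⟨f.quotKerEquivRange.trans (LieEquiv.ofBijective f.range.incl
    ⟨Subtype.val_injective, fun x => ?_⟩)⟩
  obtain ⟨y, rfl⟩ := hf x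
  exact ⟨⟨f y, f.mem_range_self y⟩, rfl⟩

theorem nonempty_equiv_of_ker_le (hs₁ : LieAlgebra.IsSimple K L₁)
    (hs₂ : LieAlgebra.IsSimple K L₂) (f : M →ₗ⁅K⁆ L₁) (g : M →ₗ⁅K⁆ L₂)
    (hf : Function.Surjective f) (hg : Function.Surjective g) (h : f.ker ≤ g.ker) :
    Nonempty (L₁ ≃ₗ⁅K⁆ L₂) := by
  have hle : g.ker ≤ f.ker := by
    refine (le_ker_or_forall_exists hs₁ f hf g.ker).resolve_right fun hall => ?_
    -- Otherwise `ker f + ker g` is everything, so `ker g` is everything and `L₂ = 0`.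
    have := LieAlgebra.IsSimple.nontrivial K L₂
    obtain ⟨x, hx⟩ := exists_ne (0 : L₂)
    obtain ⟨m, rfl⟩ := hg x
    obtain ⟨y, hy, hym⟩ := hall (f m)
    have hmy : m - y ∈ g.ker := h (by simp [LieHom.mem_ker, hym])
    rw [LieHom.mem_ker] at hy hmy
    rw [map_sub, hy, sub_zero] at hmy
    exact hx hmy
  obtain ⟨e⟩ := nonempty_quotient_equiv f hf _ rfl
  obtain ⟨e'⟩ := nonempty_quotient_equiv g hg f.ker (le_antisymm hle h)
  exact ⟨e.symm.trans e'⟩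

theorem le_ker_or_le_ker_of_inf_le (hs : LieAlgebra.IsSimple K L₁) (f : M →ₗ⁅K⁆ L₁)
    (hf : Function.Surjective f) (I J : LieIdeal K M) (h : I ⊓ J ≤ f.ker) :
    I ≤ f.ker ∨ J ≤ f.ker := by
  rcases le_ker_or_forall_exists hs f hf I with hI | hI
  · exact Or.inl hI
  rcases le_ker_or_forall_exists hs f hf J with hJ | hJ
  · exact Or.inr hJ
  refine absurd ⟨fun x y => ?_⟩ hs.non_abelian
  obtain ⟨a, ha, rfl⟩ := hI x
  obtain ⟨b, hb, rfl⟩ := hJ y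
  have hab : ⁅a, b⁆ ∈ I ⊓ J :=
    (LieSubmodule.mem_inf _ _ _).mpr ⟨lie_mem_left K M I a b ha, lie_mem_right K M J a b hb⟩
  rw [← LieHom.map_lie]
  exact LieHom.mem_ker.mp (h hab)

theorem exists_mem_of_finset_inf_ker_le {ι : Type*} [DecidableEq ι] (hs : LieAlgebra.IsSimple K L₁)
    (f : M →ₗ⁅K⁆ L₁) (hf : Function.Surjective f) (I : ι → LieIdeal K M) (S : Finset ι)
    (h : S.inf I ≤ f.ker) : ∃ j ∈ S, I j ≤ f.ker := by
  induction S using Finset.induction_on with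
  | empty =>
    have := LieAlgebra.IsSimple.nontrivial K L₁
    obtain ⟨x, hx⟩ := exists_ne (0 : L₁)
    obtain ⟨m, rfl⟩ := hf x
    exact absurd (LieHom.mem_ker.mp (h (LieSubmodule.mem_top m))) hx
  | insert a S _ ih =>
    rw [Finset.inf_insert] at h
    rcases le_ker_or_le_ker_of_inf_le hs f hf _ _ h with h | h
    · exact ⟨a, Finset.mem_insert_self a S, h⟩
    · obtain ⟨j, hj, hle⟩ := ih h
      exact ⟨j, Finset.mem_insert_of_mem hj, hle⟩

end Goursat

open DirectSum

theorem stmt4 (K : Type*) [Field K] {l : ℕ} (L : Fin l → Type*)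
    [∀ k, LieRing (L k)] [∀ k, LieAlgebra K (L k)]
    [∀ k, Module.Finite K (L k)]
    (hsimple : ∀ k, LieAlgebra.IsSimple K (L k))
    (hnoniso : ∀ j k, j ≠ k → IsEmpty (L j ≃ₗ⁅K⁆ L k))
    (H : LieSubalgebra K (⨁ k, L k))
    (hsurj : ∀ k (x : L k), ∃ y ∈ H, y k = x) :
    H = ⊤ := by
  classical
  let f (k : Fin l) : H →ₗ⁅K⁆ L k := (lieAlgebraComponent K (Fin l) L k).comp H.incl
  have hf_apply (k) (y : H) : f k y = (y : ⨁ k, L k) k := rfl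
  have hf (k) : Function.Surjective (f k) := fun x => by
    obtain ⟨y, hy, hyx⟩ := hsurj k x
    exact ⟨⟨y, hy⟩, hyx⟩
  have hof (k) (x : L k) : DirectSum.of L k x ∈ H := by
    rcases le_ker_or_forall_exists (hsimple k) (f k) (hf k)
      ((Finset.univ.erase k).inf fun j => (f j).ker) with h | h
    · obtain ⟨j, hj, hle⟩ := exists_mem_of_finset_inf_ker_le (hsimple k) (f k) (hf k) _ _ h
      obtain ⟨e⟩ := nonempty_equiv_of_ker_le (hsimple j) (hsimple k) _ _ (hf j) (hf k) hle
      exact ((hnoniso j k (Finset.ne_of_mem_erase hj)).false e).elim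
    · obtain ⟨y, hy, rfl⟩ := h x
      have hy_eq : DirectSum.of L k (f k y) = (y : ⨁ k, L k) := by
        refine DFinsupp.ext fun j => ?_
        by_cases hjk : j = k
        · subst hjk
          exact DirectSum.of_eq_same j _
        · have hle : (Finset.univ.erase k).inf (fun j => (f j).ker) ≤ (f j).ker :=
            Finset.inf_le (Finset.mem_erase.mpr ⟨hjk, Finset.mem_univ j⟩)
          exact (DirectSum.of_eq_of_ne k j _ hjk).trans (LieHom.mem_ker.mp (hle hy)).symm
      rw [hy_eq]
      exact y.2
  rw [eq_top_iff]
  intro x _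
  induction x using DirectSum.induction_on with
  | zero => exact H.zero_mem
  | of k x => exact hof k x
  | add x y hx hy => exact H.add_mem (hx trivial) (hy trivial)
end

section
/- (Speyer's lemma) Let 𝔤 be a finite-dimensional simple Lie algebra over ℂ with Cartan subalgebra 𝔥, and let V(λ) be a finite-dimensional irreducible 𝔤-module with highest weight λ ∈ 𝔥* (relative to a fixed choice of positive roots). Let D(λ) ⊆ 𝔥* be the set of weights of V(λ), and set S(λ) = { λ − μ : μ ∈ D(λ) }. Then every indecomposable element of S(λ) is a root of 𝔤 with respect to 𝔥; here ν ∈ S(λ) is called indecomposable if ν ≠ 0 and ν cannot be written as ν₁ + ν₂ with ν₁, ν₂ ∈ S(λ) both nonzero. -/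
/-!
The argument is a straightening argument without PBW. Since `𝔤` is simple over `ℂ` it is Killing,
so `𝔤` is spanned by simultaneous `H`-eigenvectors (`span_isWtVec_eq_top`), and since `V` is
irreducible it is spanned by the monomials `x₁ ⋯ xₖ v` where the `xᵢ` are such eigenvectors, of
`H`-weights `γᵢ`, and `v` is the highest weight vector (`span_act_eq_top`). As weight spaces are
independent, some monomial of weight `lam - ν` is nonzero (`exists_act_ne_zero`).

Take one with `k` minimal. Exchanging two adjacent factors changes the monomial by a monomial of
the same weight with `k - 1` factors, which is zero by minimality; hence the factors may be
permuted freely (`act_move`). Since `ν ≠ 0`, we have `k ≥ 1`, and by moving `x₁` to the right both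
`x₁ v` and `x₂ ⋯ xₖ v` are nonzero. If `γ₁ = 0` then `x₁ ∈ H` because Cartan subalgebras are
self-normalizing, so `x₁` acts on `v` by a scalar and `x₂ ⋯ xₖ v` contradicts minimality. So
`γ₁ ≠ 0`, and `ν = (-γ₁) + (ν + γ₁)` is a sum of two elements of `S(lam)`, the first nonzero.
Indecomposability forces `ν = -γ₁`. Finally `γ₁` is a root which is not positive, as `x₁ v ≠ 0`,
so `-γ₁` is a positive root.
-/

set_option linter.unusedSectionVars false

namespace Speyer

section Monomials

variable {𝔤 : Type*} [LieRing 𝔤] [LieAlgebra ℂ 𝔤] {H : LieSubalgebra ℂ 𝔤}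
  {V : Type*} [AddCommGroup V] [Module ℂ V] [LieRingModule 𝔤 V]

/-- `m` is a simultaneous eigenvector for `H` of weight `μ`; the zero vector is allowed. -/
def IsWtVec (H : LieSubalgebra ℂ 𝔤) (μ : Module.Dual ℂ H) (m : V) : Prop :=
  ∀ h : H, ⁅(h : 𝔤), m⁆ = μ h • m

/-- The monomial `x₁ ⋯ xₖ v`, for a list of pairs `(γᵢ, xᵢ)`. The first components only record
weights and do not affect the value. -/
def act (L : List (Module.Dual ℂ H × 𝔤)) (v : V) : V :=
  L.foldr (fun p w => ⁅p.2, w⁆) v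

/-- In every pair `(γ, x)` of the list, `x` is an element of `𝔤` of weight `γ`. -/
def Valid (L : List (Module.Dual ℂ H × 𝔤)) : Prop :=
  ∀ p ∈ L, IsWtVec H p.1 p.2

@[simp] lemma act_nil (v : V) : act ([] : List (Module.Dual ℂ H × 𝔤)) v = v := rfl

@[simp] lemma act_cons (p : Module.Dual ℂ H × 𝔤) (L : List (Module.Dual ℂ H × 𝔤)) (v : V) :
    act (p :: L) v = ⁅p.2, act L v⁆ := rfl

lemma act_append (L M : List (Module.Dual ℂ H × 𝔤)) (v : V) :
    act (L ++ M) v = act L (act M v) := by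
  simp [act, List.foldr_append]

lemma act_zero (L : List (Module.Dual ℂ H × 𝔤)) : act L (0 : V) = 0 := by
  induction L with
  | nil => rfl
  | cons p L ih => simp [ih]

lemma act_add (L : List (Module.Dual ℂ H × 𝔤)) (v w : V) :
    act L (v + w) = act L v + act L w := by
  induction L with
  | nil => rfl
  | cons p L ih => simp [ih]

variable [LieModule ℂ 𝔤 V]

lemma IsWtVec.lie {α μ : Module.Dual ℂ H} {x : 𝔤} {v : V} (hx : IsWtVec H α x)
    (hv : IsWtVec H μ v) : IsWtVec H (α + μ) ⁅x, v⁆ := by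
  intro h
  rw [leibniz_lie, hx h, hv h, smul_lie, lie_smul, LinearMap.add_apply, add_smul]

lemma isWtVec_act {lam : Module.Dual ℂ H} {v : V} (hv : IsWtVec H lam v)
    (L : List (Module.Dual ℂ H × 𝔤)) (hL : Valid L) :
    IsWtVec H ((L.map Prod.fst).sum + lam) (act L v) := by
  induction L with
  | nil => simpa using hv
  | cons p L ih =>
    rw [List.map_cons, List.sum_cons, add_assoc]
    exact (hL p (by simp)).lie (ih fun q hq => hL q (by simp [hq]))

/-- If all shorter monomials of weight `s` (relative to `v`) vanish, then a factor of a monomial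
of weight `s` may be moved to the far right: each exchange of adjacent factors produces a
commutator term that is a shorter monomial of the same weight. -/
lemma act_move {v : V} {n : ℕ} {s : Module.Dual ℂ H}
    (hvan : ∀ K : List (Module.Dual ℂ H × 𝔤), Valid K → K.length < n →
      (K.map Prod.fst).sum = s → act K v = 0)
    (p : Module.Dual ℂ H × 𝔤) (L : List (Module.Dual ℂ H × 𝔤)) :
    ∀ M : List (Module.Dual ℂ H × 𝔤), Valid (M ++ p :: L) → (M ++ p :: L).length = n →
      ((M ++ p :: L).map Prod.fst).sum = s →
      act (M ++ p :: L) v = act (M ++ (L ++ [p])) v := by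
  induction L with
  | nil => intro M _ _ _; simp
  | cons q L ih =>
    intro M hV hn hs
    have hp : IsWtVec H p.1 p.2 := hV p (by simp)
    have hq : IsWtVec H q.1 q.2 := hV q (by simp)
    have hshort : act (M ++ (p.1 + q.1, ⁅p.2, q.2⁆) :: L) v = 0 := by
      apply hvan
      · intro r hr
        simp only [List.mem_append, List.mem_cons] at hr
        rcases hr with hr | rfl | hr
        · exact hV r (by simp [hr])
        · exact hp.lie hq
        · exact hV r (by simp [hr])
      · simp only [List.length_append, List.length_cons] at hn ⊢
        omega
      · rw [← hs]
        simp only [List.map_append, List.map_cons, List.sum_append, List.sum_cons]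
        abel
    have hswap : act (M ++ p :: q :: L) v =
        act (M ++ (p.1 + q.1, ⁅p.2, q.2⁆) :: L) v + act ((M ++ [q]) ++ p :: L) v := by
      simp only [act_append, act_cons, act_nil]
      rw [leibniz_lie, act_add]
    rw [hswap, hshort, zero_add, ih (M ++ [q])]
    · simp
    · intro r hr
      apply hV r
      simp only [List.mem_append, List.mem_cons, List.not_mem_nil, or_false] at hr ⊢
      tauto
    · rw [← hn]
      simp only [List.length_append, List.length_cons, List.length_nil]
      omega
    · rw [← hs]
      simp only [List.map_append, List.map_cons, List.map_nil, List.sum_append, List.sum_cons,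
        List.sum_nil]
      abel

/-- Elements of weight zero lie in the Cartan subalgebra, because it is self-normalizing. -/
lemma mem_of_isWtVec_zero [H.IsCartanSubalgebra] {x : 𝔤} (hx : IsWtVec H 0 x) : x ∈ H := by
  rw [← LieSubalgebra.IsCartanSubalgebra.self_normalizing (H := H),
    LieSubalgebra.mem_normalizer_iff']
  intro y hy
  have := hx ⟨y, hy⟩
  simp only [LinearMap.zero_apply, zero_smul] at this
  rw [this]
  exact H.zero_mem

/-- The root space decomposition: simple Lie algebras over `ℂ` are Killing by Cartan's criterion,
hence `H` acts on `𝔤` diagonalizably. -/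
lemma span_isWtVec_eq_top [FiniteDimensional ℂ 𝔤] [LieAlgebra.IsSimple ℂ 𝔤]
    [H.IsCartanSubalgebra] :
    Submodule.span ℂ {x : 𝔤 | ∃ α : Module.Dual ℂ H, IsWtVec H α x} = ⊤ := by
  rw [eq_top_iff, ← LieSubmodule.top_toSubmodule (R := ℂ) (L := H) (M := 𝔤),
    ← LieModule.iSup_genWeightSpace_eq_top' ℂ H 𝔤, LieSubmodule.iSup_toSubmodule, iSup_le_iff]
  intro α x hx
  refine Submodule.subset_span ⟨LieModule.Weight.toLinear ℂ H 𝔤 α, fun h => ?_⟩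
  exact LieAlgebra.IsKilling.lie_eq_smul_of_mem_rootSpace hx h

lemma span_act_eq_top [FiniteDimensional ℂ 𝔤] [LieAlgebra.IsSimple ℂ 𝔤]
    [H.IsCartanSubalgebra] (hirr : ∀ U : LieSubmodule ℂ 𝔤 V, U = ⊥ ∨ U = ⊤)
    {v : V} (hv : v ≠ 0) :
    Submodule.span ℂ {w : V | ∃ L : List (Module.Dual ℂ H × 𝔤), Valid L ∧ w = act L v} = ⊤ := by
  set S := Submodule.span ℂ {w : V | ∃ L : List (Module.Dual ℂ H × 𝔤), Valid L ∧ w = act L v}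
  let U : LieSubmodule ℂ 𝔤 V :=
    { S with
      lie_mem := by
        intro x m hm
        change ⁅x, m⁆ ∈ S
        change m ∈ S at hm
        have hx : x ∈ Submodule.span ℂ {x : 𝔤 | ∃ α : Module.Dual ℂ H, IsWtVec H α x} := by
          rw [span_isWtVec_eq_top]; trivial
        induction hx using Submodule.span_induction with
        | mem x hx =>
          obtain ⟨α, hα⟩ := hx
          induction hm using Submodule.span_induction with
          | mem m hm =>
            obtain ⟨L, hL, rfl⟩ := hm
            refine Submodule.subset_span ⟨(α, x) :: L, ?_, rfl⟩
            intro p hp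
            rcases List.mem_cons.1 hp with rfl | hp
            · exact hα
            · exact hL p hp
          | zero => rw [lie_zero]; exact S.zero_mem
          | add a b _ _ ha hb => rw [lie_add]; exact S.add_mem ha hb
          | smul c a _ ha => rw [lie_smul]; exact S.smul_mem c ha
        | zero => rw [zero_lie]; exact S.zero_mem
        | add a b _ _ ha hb => rw [add_lie]; exact S.add_mem ha hb
        | smul c a _ ha => rw [smul_lie]; exact S.smul_mem c ha }
  have hvS : v ∈ U :=
    Submodule.subset_span ⟨[], by intro p hp; simp at hp, rfl⟩
  rcases hirr U with h | h
  · rw [h, LieSubmodule.mem_bot] at hvS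
    exact absurd hvS hv
  · have : (U : Submodule ℂ V) = ⊤ := by rw [h]; rfl
    exact this

/-- Every weight of `V` is attained by a nonzero monomial applied to `v`, because weight spaces
of distinct weights are independent. -/
lemma exists_act_ne_zero [FiniteDimensional ℂ 𝔤] [LieAlgebra.IsSimple ℂ 𝔤]
    [H.IsCartanSubalgebra] (hirr : ∀ U : LieSubmodule ℂ 𝔤 V, U = ⊥ ∨ U = ⊤)
    {lam μ : Module.Dual ℂ H} {v w : V} (hv : v ≠ 0) (hvwt : IsWtVec H lam v)
    (hw : w ≠ 0) (hwwt : IsWtVec H μ w) :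
    ∃ L : List (Module.Dual ℂ H × 𝔤), Valid L ∧ (L.map Prod.fst).sum + lam = μ ∧
      act L v ≠ 0 := by
  by_contra! hcon
  have hgen : ∀ (χ : Module.Dual ℂ H) (m : V), IsWtVec H χ m →
      m ∈ LieModule.genWeightSpace V (χ : H → ℂ) := fun χ m hm =>
    LieModule.weightSpace_le_genWeightSpace V _ ((LieModule.mem_weightSpace _ _).2 hm)
  have hind := LieModule.iSupIndep_genWeightSpace ℂ H V (μ : H → ℂ)
  have hle : (⊤ : Submodule ℂ V) ≤
      (⨆ (χ : H → ℂ) (_ : χ ≠ μ), LieModule.genWeightSpace V χ : LieSubmodule ℂ H V) := by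
    rw [← span_act_eq_top (H := H) hirr hv, Submodule.span_le]
    rintro _ ⟨L, hL, rfl⟩
    by_cases hs : (L.map Prod.fst).sum + lam = μ
    · rw [hcon L hL hs]
      exact Submodule.zero_mem _
    · have hne : (((L.map Prod.fst).sum + lam : Module.Dual ℂ H) : H → ℂ) ≠ μ :=
        fun h => hs (DFunLike.coe_injective h)
      exact (le_iSup₂_of_le (f := fun (χ : H → ℂ) (_ : χ ≠ μ) => LieModule.genWeightSpace V χ)
        _ hne le_rfl) (hgen _ _ (isWtVec_act hvwt L hL))
  have hbot := hind.le_bot (x := w) ⟨hgen μ w hwwt, hle trivial⟩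
  exact hw ((LieSubmodule.mem_bot w).1 hbot)

end Monomials

end Speyer


theorem stmt5_speyer
    (𝔤 : Type*) [LieRing 𝔤] [LieAlgebra ℂ 𝔤] [FiniteDimensional ℂ 𝔤]
    [LieAlgebra.IsSimple ℂ 𝔤]
    (H : LieSubalgebra ℂ 𝔤) [H.IsCartanSubalgebra]
    (V : Type*) [AddCommGroup V] [Module ℂ V] [LieRingModule 𝔤 V] [LieModule ℂ 𝔤 V]
    [FiniteDimensional ℂ V] [Nontrivial V]
    -- `V` is irreducible
    (hirr : ∀ U : LieSubmodule ℂ 𝔤 V, U = ⊥ ∨ U = ⊤)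
    -- `IsWeight μ` means `μ` is a weight of `V` relative to the Cartan subalgebra `H`
    (IsWeight : Module.Dual ℂ H → Prop)
    (hWeight : ∀ μ, IsWeight μ ↔ ∃ v : V, v ≠ 0 ∧ ∀ h : H, ⁅(h : 𝔤), v⁆ = μ h • v)
    -- `IsRoot α` means `α` is a root of `(𝔤, H)`
    (IsRoot : Module.Dual ℂ H → Prop)
    (hRoot : ∀ α, IsRoot α ↔ α ≠ 0 ∧ ∃ x : 𝔤, x ≠ 0 ∧ ∀ h : H, ⁅(h : 𝔤), x⁆ = α h • x)
    -- `P` is a fixed choice of positive roots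
    (P : Set (Module.Dual ℂ H))
    (hPsub : ∀ α ∈ P, IsRoot α)
    (hPchoice : ∀ α, IsRoot α → (α ∈ P ↔ -α ∉ P))
    (hPclosed : ∀ α ∈ P, ∀ β ∈ P, IsRoot (α + β) → α + β ∈ P)
    -- `lam` is the highest weight of `V` relative to `P`: it has a nonzero weight vector
    -- `vlam` annihilated by all the root vectors of positive roots
    (lam : Module.Dual ℂ H) (hlam : IsWeight lam)
    (vlam : V) (hvlam : vlam ≠ 0)
    (hvwt : ∀ h : H, ⁅(h : 𝔤), vlam⁆ = lam h • vlam)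
    (hhw : ∀ α ∈ P, ∀ x : 𝔤, (∀ h : H, ⁅(h : 𝔤), x⁆ = α h • x) → ⁅x, vlam⁆ = 0)
    -- `ν` is an indecomposable element of `S(lam) = lam - D(lam)`
    (ν : Module.Dual ℂ H)
    (hν : ∃ μ, IsWeight μ ∧ ν = lam - μ)
    (hν0 : ν ≠ 0)
    (hindec : ¬ ∃ ν₁ ν₂ : Module.Dual ℂ H,
      (∃ μ₁, IsWeight μ₁ ∧ ν₁ = lam - μ₁) ∧ (∃ μ₂, IsWeight μ₂ ∧ ν₂ = lam - μ₂) ∧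
      ν₁ ≠ 0 ∧ ν₂ ≠ 0 ∧ ν = ν₁ + ν₂) :
    IsRoot ν := by
  classical
  obtain ⟨μ, hμ, hνμ⟩ := hν
  obtain ⟨w, hw, hwwt⟩ := (hWeight μ).1 hμ
  obtain ⟨L₀, hL₀, hsum₀, hne₀⟩ :=
    Speyer.exists_act_ne_zero hirr hvlam hvwt hw hwwt
  have hex : ∃ n, ∃ L : List (Module.Dual ℂ H × 𝔤), Speyer.Valid L ∧ L.length = n ∧
      (L.map Prod.fst).sum = -ν ∧ Speyer.act L vlam ≠ 0 :=
    ⟨_, L₀, hL₀, rfl, by rw [hνμ, ← hsum₀]; abel, hne₀⟩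
  obtain ⟨L, hL, hlen, hsum, hne⟩ := Nat.find_spec hex
  have hvan : ∀ K : List (Module.Dual ℂ H × 𝔤), Speyer.Valid K → K.length < Nat.find hex →
      (K.map Prod.fst).sum = -ν → Speyer.act K vlam = 0 := by
    intro K hK hlt hs
    by_contra h
    exact Nat.find_min hex hlt ⟨K, hK, rfl, hs, h⟩
  cases L with
  | nil => exact absurd (neg_eq_zero.1 hsum.symm) hν0
  | cons p L =>
    have hmove : Speyer.act (p :: L) vlam = Speyer.act L ⁅p.2, vlam⁆ := by
      rw [← List.nil_append (p :: L), Speyer.act_move hvan p L [] hL hlen hsum,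
        List.nil_append, Speyer.act_append]
      rfl
    have hp : Speyer.IsWtVec H p.1 p.2 := hL p (by simp)
    have hL' : Speyer.Valid L := fun q hq => hL q (by simp [hq])
    have hpv : ⁅p.2, vlam⁆ ≠ 0 := by
      intro h
      rw [hmove, h, Speyer.act_zero] at hne
      exact hne rfl
    have hLv : Speyer.act L vlam ≠ 0 := by
      intro h
      rw [Speyer.act_cons, h, lie_zero] at hne
      exact hne rfl
    rw [List.map_cons, List.sum_cons] at hsum
    have hp0 : p.1 ≠ 0 := by
      intro h0
      rw [h0] at hp
      have hs : (L.map Prod.fst).sum = -ν := by rw [← hsum, h0, zero_add]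
      refine hLv (hvan L hL' ?_ hs)
      rw [← hlen, List.length_cons]
      exact Nat.lt_succ_self _
    have hx0 : p.2 ≠ 0 := by
      intro h
      rw [h, zero_lie] at hpv
      exact hpv rfl
    have hproot : IsRoot p.1 := (hRoot _).2 ⟨hp0, p.2, hx0, hp⟩
    have hpP : p.1 ∉ P := fun h => hpv (hhw _ h _ hp)
    have hnegroot : IsRoot (-p.1) :=
      hPsub _ (not_not.1 fun h => hpP ((hPchoice _ hproot).2 h))
    have hw1 : IsWeight (p.1 + lam) := (hWeight _).2 ⟨_, hpv, Speyer.IsWtVec.lie hp hvwt⟩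
    have hw2 : IsWeight ((L.map Prod.fst).sum + lam) :=
      (hWeight _).2 ⟨_, hLv, Speyer.isWtVec_act hvwt L hL'⟩
    have hνeq : ν = -p.1 + -(L.map Prod.fst).sum := by rw [← neg_add, hsum, neg_neg]
    by_cases hrest : (L.map Prod.fst).sum = 0
    · rw [hνeq, hrest, neg_zero, add_zero]
      exact hnegroot
    · exact absurd ⟨-p.1, -(L.map Prod.fst).sum, ⟨_, hw1, by abel⟩, ⟨_, hw2, by abel⟩,
        neg_ne_zero.2 hp0, neg_ne_zero.2 hrest, hνeq⟩ hindec
end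

section
/- Let p be an odd prime and let A ∈ ℂ be a primitive 4p-th root of unity. Then the map i ↦ (−1)^i A^{i(i+2)} is injective on the set {0, 1, …, p−2}; that is, for all 0 ≤ i < i' ≤ p−2 one has (−1)^i A^{i(i+2)} ≠ (−1)^{i'} A^{i'(i'+2)}. -/
/-!
Since `A ^ (2 * p) = -1`, an equality of twist eigenvalues is a congruence
`2 p i + i (i + 2) ≡ 2 p i' + i' (i' + 2)` modulo `4 p`. Modulo `p` it says that `p` divides
`(i - i') (i + i' + 2)`; for colors in `{0, …, p - 2}` this leaves `i = i'` or `i + i' + 2 = p`.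
Modulo `2` it says that `i` and `i'` have the same parity, which rules out the second case
because `p` is odd.
-/

theorem stmt10 (p : ℕ) (hp : p.Prime) (hodd : Odd p) (A : ℂ)
    (hA : IsPrimitiveRoot A (4 * p)) :
    ∀ i i' : ℕ, i ≤ p - 2 → i' ≤ p - 2 →
      (-1 : ℂ) ^ i * A ^ (i * (i + 2)) = (-1 : ℂ) ^ i' * A ^ (i' * (i' + 2)) → i = i' := by
  intro i j hi hj h
  have hp2 := hp.two_le
  have hneg : A ^ (2 * p) = -1 :=
    (hA.pow (by omega) (by ring : 4 * p = (2 * p) * 2)).eq_neg_one_of_two_right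
  have hfin : IsOfFinOrder A :=
    isOfFinOrder_iff_pow_eq_one.mpr ⟨4 * p, by omega, hA.pow_eq_one⟩
  rw [← hneg, ← pow_mul, ← pow_mul, ← pow_add, ← pow_add, hfin.pow_eq_pow_iff_modEq,
    ← hA.eq_orderOf] at h
  obtain ⟨c, hc⟩ := h.dvd
  push_cast at hc
  have hdvd : (p : ℤ) ∣ ((j : ℤ) - i) * (i + j + 2) :=
    ⟨4 * c - 2 * (j - i), by linear_combination hc⟩
  have hpar : (i + j) % 2 = 0 := by
    have he : Even (((j : ℤ) - i) * (i + j + 2)) :=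
      ⟨p * (2 * c - (j - i)), by linear_combination hc⟩
    rcases Int.even_mul.mp he with ⟨k, hk⟩ | ⟨k, hk⟩ <;> omega
  rcases (Nat.prime_iff_prime_int.mp hp).dvd_or_dvd hdvd with hd | hd
  · have := Int.eq_zero_of_abs_lt_dvd hd (by rw [abs_lt]; constructor <;> omega)
    omega
  · obtain ⟨k, hk⟩ := hd
    have hk0 : 0 < k := by
      by_contra! hle
      nlinarith
    -- `i + j + 2 ≤ 2 * p - 2`, so the quotient is `1`.
    have hk2 : k < 2 := by
      by_contra! hge
      have : (i : ℤ) + j + 2 < 2 * p := by omega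
      nlinarith
    obtain rfl : k = 1 := by omega
    obtain ⟨m, hm⟩ := hodd
    omega
end

section
/- Let A ∈ ℂ be transcendental over ℚ. Let a, b, c, d, i, j be nonnegative integers such that each of the triples (a,b,i), (c,d,i), (a,d,j), (b,c,j) is admissible, i.e. satisfies the triangle inequalities and has even sum. Set m₁=(a+b+i)/2, m₂=(a+d+j)/2, m₃=(b+c+j)/2, m₄=(c+d+i)/2 and n₁=(a+b+c+d)/2, n₂=(b+d+i+j)/2, n₃=(a+c+i+j)/2. Then each n_s − m_t (1 ≤ s ≤ 3, 1 ≤ t ≤ 4) is a nonnegative integer, max_t m_t ≤ min_s n_s, and the tetrahedron coefficient ⟨a b i; c d j⟩ := (∏_{s=1}^{3} ∏_{t=1}^{4} [n_s − m_t]!) / ([a]![b]![c]![d]![i]![j]!) · Σ_{z = max_t m_t}^{min_s n_s} (−1)^z [z+1]! / (∏_{s=1}^{3}[n_s − z]! · ∏_{t=1}^{4}[z − m_t]!) is a nonzero complex number. -/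
/-!
The sum is nonzero because its terms have pairwise distinct orders at `A = 0`, so that the term of
most negative order cannot be cancelled.

Up to a power of `A`, the quantum integer `[m]` is the polynomial `1 + A⁴ + ⋯ + A^{4(m-1)}`, of
constant coefficient `1`. Hence `[m]!` behaves like `A^{-m(m-1)}`, and the term of index `z`
behaves like `(-1)^z A^{-e(z)}` with
`e(z) = (z+1)z - ∑ₛ (nₛ-z)(nₛ-z-1) - ∑ₜ (z-mₜ)(z-mₜ-1)`.
Both `∑ₛ nₛ` and `∑ₜ mₜ` equal `S = a+b+c+d+i+j`, so `e(z) = -6z² + (4S+2)z + const`, and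
`e(y) - e(z) = (y-z)(4S+2-6(y+z))`. As `3y ≤ n₁+n₂+n₃ = S` for each index `y` in the sum, `e` is
strictly increasing on the range of summation and the top term `z = min nₛ` dominates.

The expansion at `A = 0` is formal: `Lead A x k c` records that `x A^k` is a quotient of
polynomials in `A` over `ℚ` regular at `0` with value `c` there. Transcendence of `A` ensures that
`c ≠ 0` forces `x ≠ 0`. The calculus of `Lead` under products, inverses and sums carries the proof.
-/

/-- A triple `(i, j, k)` of nonnegative integers is admissible if
`|i - j| ≤ k ≤ i + j` and `i + j + k` is even. -/
def Admissible (i j k : ℕ) : Prop :=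
  k ≤ i + j ∧ i ≤ j + k ∧ j ≤ i + k ∧ Even (i + j + k)

/-- The quantum integer `[m] = (A^{2m} - A^{-2m})/(A^2 - A^{-2})`. -/
noncomputable def qInt (A : ℂ) (m : ℕ) : ℂ :=
  (A ^ (2 * (m : ℤ)) - A ^ (-(2 * (m : ℤ)))) / (A ^ (2 : ℤ) - A ^ (-2 : ℤ))

/-- The quantum factorial `[m]! = [1][2]⋯[m]`, with `[0]! = 1`. -/
noncomputable def qFact (A : ℂ) (m : ℕ) : ℂ :=
  ∏ t ∈ Finset.range m, qInt A (t + 1)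

/-- The half-sums `m₁ = (a+b+i)/2`, `m₂ = (a+d+j)/2`, `m₃ = (b+c+j)/2`, `m₄ = (c+d+i)/2`. -/
def tetM (a b c d i j : ℕ) : Fin 4 → ℕ :=
  ![(a + b + i) / 2, (a + d + j) / 2, (b + c + j) / 2, (c + d + i) / 2]

/-- The half-sums `n₁ = (a+b+c+d)/2`, `n₂ = (b+d+i+j)/2`, `n₃ = (a+c+i+j)/2`. -/
def tetN (a b c d i j : ℕ) : Fin 3 → ℕ :=
  ![(a + b + c + d) / 2, (b + d + i + j) / 2, (a + c + i + j) / 2]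

/-- `max_t m_t`. -/
def tetMMax (a b c d i j : ℕ) : ℕ :=
  max (max (tetM a b c d i j 0) (tetM a b c d i j 1))
    (max (tetM a b c d i j 2) (tetM a b c d i j 3))

/-- `min_s n_s`. -/
def tetNMin (a b c d i j : ℕ) : ℕ :=
  min (tetN a b c d i j 0) (min (tetN a b c d i j 1) (tetN a b c d i j 2))

/-- The tetrahedron coefficient `⟨a b i; c d j⟩`. -/
noncomputable def tetCoeff (A : ℂ) (a b c d i j : ℕ) : ℂ :=
  (∏ s : Fin 3, ∏ t : Fin 4, qFact A (tetN a b c d i j s - tetM a b c d i j t)) /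
    (qFact A a * qFact A b * qFact A c * qFact A d * qFact A i * qFact A j) *
  ∑ z ∈ Finset.Icc (tetMMax a b c d i j) (tetNMin a b c d i j),
    (-1 : ℂ) ^ z * qFact A (z + 1) /
      ((∏ s : Fin 3, qFact A (tetN a b c d i j s - z)) *
        ∏ t : Fin 4, qFact A (z - tetM a b c d i j t))

open Polynomial

/-- `x * A ^ k` is a fraction `p(A) / q(A)` with `p q : ℚ[X]`, `q(0) = 1` and `p(0) = c`: formally,
`x` has expansion `c A^{-k} + higher powers of A`. The value `c = 0` is allowed. -/
def Lead (A x : ℂ) (k : ℤ) (c : ℚ) : Prop :=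
  ∃ p q : ℚ[X], p.coeff 0 = c ∧ q.coeff 0 = 1 ∧ x * A ^ k * aeval A q = aeval A p

section Lead

variable {A : ℂ}

lemma aeval_ne_zero_of_coeff (hA : Transcendental ℚ A) {p : ℚ[X]} (hp : p.coeff 0 ≠ 0) :
    aeval A p ≠ 0 := by
  intro h
  rw [(transcendental_iff.mp hA) p h] at hp
  simp at hp

lemma Lead.ne_zero (hA : Transcendental ℚ A) {x : ℂ} {k : ℤ} {c : ℚ} (h : Lead A x k c)
    (hc : c ≠ 0) : x ≠ 0 := by
  obtain ⟨p, q, hp, hq, e⟩ := h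
  rintro rfl
  refine aeval_ne_zero_of_coeff hA (p := p) (by rwa [hp]) ?_
  rw [← e]
  simp

lemma Lead.mul (h0 : A ≠ 0) {x y : ℂ} {k l : ℤ} {c d : ℚ} (hx : Lead A x k c)
    (hy : Lead A y l d) : Lead A (x * y) (k + l) (c * d) := by
  obtain ⟨p, q, hp, hq, e⟩ := hx
  obtain ⟨p', q', hp', hq', e'⟩ := hy
  refine ⟨p * p', q * q', by simp [mul_coeff_zero, hp, hp'], by simp [mul_coeff_zero, hq, hq'], ?_⟩
  rw [map_mul, map_mul, ← e, ← e', zpow_add₀ h0]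
  ring

lemma Lead.inv (hA : Transcendental ℚ A) (h0 : A ≠ 0) {x : ℂ} {k : ℤ} (hx : Lead A x k 1) :
    Lead A x⁻¹ (-k) 1 := by
  have hx0 := hx.ne_zero hA one_ne_zero
  obtain ⟨p, q, hp, hq, e⟩ := hx
  refine ⟨q, p, hq, hp, ?_⟩
  have := zpow_ne_zero k h0
  rw [← e, zpow_neg]
  field_simp

lemma Lead.div (hA : Transcendental ℚ A) (h0 : A ≠ 0) {x y : ℂ} {k l : ℤ} {c : ℚ}
    (hx : Lead A x k c) (hy : Lead A y l 1) : Lead A (x / y) (k - l) c := by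
  simpa [div_eq_mul_inv, sub_eq_add_neg] using hx.mul h0 (hy.inv hA h0)

lemma Lead.add {x y : ℂ} {k : ℤ} {c d : ℚ} (hx : Lead A x k c) (hy : Lead A y k d) :
    Lead A (x + y) k (c + d) := by
  obtain ⟨p, q, hp, hq, e⟩ := hx
  obtain ⟨p', q', hp', hq', e'⟩ := hy
  refine ⟨p * q' + p' * q, q * q', by simp [mul_coeff_zero, hp, hp', hq, hq'],
    by simp [mul_coeff_zero, hq, hq'], ?_⟩
  rw [map_mul, map_add, map_mul, map_mul, ← e, ← e']
  ring

lemma Lead.sum_zero {ι : Type*} (s : Finset ι) (f : ι → ℂ) (k : ℤ)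
    (h : ∀ z ∈ s, Lead A (f z) k 0) : Lead A (∑ z ∈ s, f z) k 0 := by
  refine Finset.sum_induction f (fun x => Lead A x k 0) (fun x y hx hy => ?_) ?_ h
  · simpa using hx.add hy
  · exact ⟨0, 1, by simp, by simp, by simp⟩

/-- A term is negligible at any scale strictly more singular than its own. -/
lemma Lead.of_lt (h0 : A ≠ 0) {x : ℂ} {k l : ℤ} {c : ℚ} (hx : Lead A x k c) (hkl : k < l) :
    Lead A x l 0 := by
  obtain ⟨p, q, hp, hq, e⟩ := hx
  obtain ⟨n, hn⟩ := Int.le.dest hkl.le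
  have hn0 : n ≠ 0 := by rintro rfl; simp at hn; omega
  refine ⟨p * X ^ n, q, by simp [mul_coeff_zero, hn0.symm, coeff_X_pow], hq, ?_⟩
  rw [map_mul, ← e, ← hn, zpow_add₀ h0, map_pow, aeval_X, zpow_natCast]
  ring

lemma lead_one : Lead A 1 0 1 := ⟨1, 1, by simp, by simp, by simp⟩

lemma lead_neg_one_pow (z : ℕ) : Lead A ((-1) ^ z) 0 ((-1) ^ z) :=
  ⟨C ((-1) ^ z), 1, coeff_C_zero, by simp, by simp⟩

lemma lead_qInt (hA : Transcendental ℚ A) (h0 : A ≠ 0) (m : ℕ) :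
    Lead A (qInt A (m + 1)) (2 * m) 1 := by
  have h4 : A ^ 4 - 1 ≠ 0 := by
    have := aeval_ne_zero_of_coeff hA (p := X ^ 4 - 1) (by simp [coeff_X_pow])
    simpa using this
  refine ⟨∑ t ∈ Finset.range (m + 1), (X ^ 4) ^ t, 1, ?_, by simp, ?_⟩
  · rw [coeff_zero_eq_eval_zero, Finset.sum_range_succ']
    simp [eval_finsetSum]
  · have h2 : A ^ (2 : ℤ) - A ^ (-2 : ℤ) = (A ^ 4 - 1) / A ^ 2 := by
      rw [zpow_neg, show (2 : ℤ) = ((2 : ℕ) : ℤ) by rfl, zpow_natCast]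
      field_simp
    rw [map_sum]
    simp only [map_pow, aeval_X, map_one, mul_one]
    rw [geom_sum_eq (by intro h; exact h4 (by rw [h, sub_self])), qInt, h2, zpow_neg,
      show (2 : ℤ) * ((m + 1 : ℕ) : ℤ) = ((2 * (m + 1) : ℕ) : ℤ) by push_cast; ring,
      show (2 : ℤ) * (m : ℤ) = ((2 * m : ℕ) : ℤ) by push_cast; ring, zpow_natCast, zpow_natCast]
    field_simp
    ring

lemma lead_qFact (hA : Transcendental ℚ A) (h0 : A ≠ 0) (m : ℕ) :
    Lead A (qFact A m) (m * (m - 1)) 1 := by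
  induction m with
  | zero => simpa [qFact] using lead_one
  | succ m ih =>
    rw [qFact, Finset.prod_range_succ]
    have := ih.mul h0 (lead_qInt hA h0 m)
    rw [qFact] at this
    convert this using 1
    · push_cast; ring
    · norm_num

lemma lead_qFact_sub (hA : Transcendental ℚ A) (h0 : A ≠ 0) {m n : ℕ} (h : m ≤ n) :
    Lead A (qFact A (n - m)) ((n - m) * (n - m - 1)) 1 := by
  have := lead_qFact hA h0 (n - m)
  rwa [Nat.cast_sub h] at this

end Lead

/-- The order of the pole at `A = 0` of the term of index `z`. -/
def poleOrder (n : Fin 3 → ℕ) (m : Fin 4 → ℕ) (z : ℕ) : ℤ :=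
  (z + 1) * z - ((∑ s, ((n s : ℤ) - z) * (n s - z - 1)) + ∑ t, ((z : ℤ) - m t) * (z - m t - 1))

lemma lead_term {A : ℂ} (hA : Transcendental ℚ A) (h0 : A ≠ 0) (n : Fin 3 → ℕ) (m : Fin 4 → ℕ)
    (z : ℕ) (hn : ∀ s, z ≤ n s) (hm : ∀ t, m t ≤ z) :
    Lead A ((-1 : ℂ) ^ z * qFact A (z + 1) /
      ((∏ s, qFact A (n s - z)) * ∏ t, qFact A (z - m t))) (poleOrder n m z) ((-1) ^ z) := by
  have hN : Lead A (∏ s, qFact A (n s - z)) (∑ s, ((n s : ℤ) - z) * (n s - z - 1)) 1 := by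
    have h := fun s => lead_qFact_sub hA h0 (hn s)
    simpa [Fin.prod_univ_succ, Fin.sum_univ_succ] using
      (h 0).mul h0 ((h 1).mul h0 (h 2))
  have hM : Lead A (∏ t, qFact A (z - m t)) (∑ t, ((z : ℤ) - m t) * (z - m t - 1)) 1 := by
    have h := fun t => lead_qFact_sub hA h0 (hm t)
    simpa [Fin.prod_univ_succ, Fin.sum_univ_succ] using
      (h 0).mul h0 ((h 1).mul h0 ((h 2).mul h0 (h 3)))
  have := ((lead_neg_one_pow z).mul h0 (lead_qFact hA h0 (z + 1))).div hA h0 (by simpa using hN.mul h0 hM)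
  convert this using 1
  · simp [poleOrder]
  · simp

lemma poleOrder_lt (n : Fin 3 → ℕ) (m : Fin 4 → ℕ) (h : ∑ s, n s = ∑ t, m t) {y z : ℕ}
    (hy : ∀ s, y ≤ n s) (hz : z < y) : poleOrder n m z < poleOrder n m y := by
  have h3 : 3 * y ≤ ∑ s, n s := by
    have := hy 0; have := hy 1; have := hy 2
    simp only [Fin.sum_univ_three]; omega
  have key : poleOrder n m y - poleOrder n m z
      = ((y : ℤ) - z) * (4 * ((∑ s, n s : ℕ) : ℤ) + 2 - 6 * (y + z)) := by
    have h' : (m 3 : ℤ) = n 0 + n 1 + n 2 - m 0 - m 1 - m 2 := by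
      simp only [Fin.sum_univ_three, Fin.sum_univ_four] at h; omega
    simp only [poleOrder, Fin.sum_univ_three, Fin.sum_univ_four, h']
    push_cast
    ring
  have : 0 < ((y : ℤ) - z) * (4 * ((∑ s, n s : ℕ) : ℤ) + 2 - 6 * (y + z)) :=
    mul_pos (by omega) (by omega)
  omega

theorem stmt12 (A : ℂ) (hA : Transcendental ℚ A) (a b c d i j : ℕ)
    (h1 : Admissible a b i) (h2 : Admissible c d i)
    (h3 : Admissible a d j) (h4 : Admissible b c j) :
    (∀ (s : Fin 3) (t : Fin 4), tetM a b c d i j t ≤ tetN a b c d i j s) ∧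
    tetMMax a b c d i j ≤ tetNMin a b c d i j ∧
    tetCoeff A a b c d i j ≠ 0 := by
  have h0 : A ≠ 0 := by
    rintro rfl
    exact hA isAlgebraic_zero
  obtain ⟨h11, h12, h13, k1, h14⟩ := h1
  obtain ⟨h21, h22, h23, k2, h24⟩ := h2
  obtain ⟨h31, h32, h33, k3, h34⟩ := h3
  obtain ⟨h41, h42, h43, k4, h44⟩ := h4
  have hst : ∀ (s : Fin 3) (t : Fin 4), tetM a b c d i j t ≤ tetN a b c d i j s := by
    intro s t
    fin_cases s <;> fin_cases t <;> simp [tetM, tetN] <;> omega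
  have hS : ∑ s, tetN a b c d i j s = ∑ t, tetM a b c d i j t := by
    simp [Fin.sum_univ_succ, tetM, tetN]
    omega
  have hmax : ∀ t, tetM a b c d i j t ≤ tetMMax a b c d i j := by
    intro t
    fin_cases t <;> simp [tetMMax]
  have hmin : ∀ s, tetNMin a b c d i j ≤ tetN a b c d i j s := by
    intro s
    fin_cases s <;> simp [tetNMin]
  have hle : tetMMax a b c d i j ≤ tetNMin a b c d i j := by
    simp only [tetMMax, tetNMin, max_le_iff, le_min_iff]
    simp only [hst, and_self]
  have hq : ∀ m, qFact A m ≠ 0 := fun m => (lead_qFact hA h0 m).ne_zero hA one_ne_zero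
  refine ⟨hst, hle, mul_ne_zero (div_ne_zero ?_ ?_) ?_⟩
  · exact Finset.prod_ne_zero_iff.mpr fun s _ => Finset.prod_ne_zero_iff.mpr fun t _ => hq _
  · simp [hq]
  · generalize tetM a b c d i j = m at *
    generalize tetN a b c d i j = n at *
    generalize tetMMax a b c d i j = M at *
    generalize tetNMin a b c d i j = N at *
    have top := lead_term hA h0 n m N hmin fun t => (hmax t).trans hle
    rw [← Finset.insert_erase (Finset.right_mem_Icc.mpr hle),
      Finset.sum_insert (Finset.notMem_erase _ _)]
    refine (top.add (Lead.sum_zero _ _ _ fun z hz => ?_)).ne_zero hA (by simp)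
    obtain ⟨hzN, hz⟩ := Finset.mem_erase.mp hz
    obtain ⟨hMz, hz⟩ := Finset.mem_Icc.mp hz
    exact (lead_term hA h0 n m z (fun s => hz.trans (hmin s)) fun t => (hmax t).trans hMz).of_lt h0
      (poleOrder_lt n m hS hmin (by omega))
end

section
/- Let n ≥ 4 and let c₁, …, c_n be positive integers. Let N(c₁,…,c_n) denote the number of admissible fusion paths for (c₁,…,c_n), i.e. sequences (x₀, x₁, …, x_{n−2}) of nonnegative integers with x₀ = c₁ and x_{n−2} = c_n such that for each k = 1, …, n−2 the triple (x_{k−1}, c_{k+1}, x_k) is admissible (|x_{k−1} − c_{k+1}| ≤ x_k ≤ x_{k−1} + c_{k+1} and x_{k−1} + c_{k+1} + x_k even). Then N(c₁,…,c_n) = 1 if and only if there exists an index m with c_m = Σ_{i ≠ m} c_i. -/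
/-- An admissible fusion path for boundary colors `c 1, …, c n` (1-indexed): a sequence
`x 0, x 1, …, x (n-2)` of nonnegative integers with `x 0 = c 1`, `x (n-2) = c n`, such that
each triple `(x (k-1), c (k+1), x k)`, `k = 1, …, n-2`, is admissible.  (The values `x k` for
`k > n-2` are normalized to `0` so that paths correspond bijectively to such functions.) -/
def IsFusionPath (n : ℕ) (c : ℕ → ℕ) (x : ℕ → ℕ) : Prop :=
  x 0 = c 1 ∧ x (n - 2) = c n ∧
  (∀ k, 1 ≤ k → k ≤ n - 2 → Admissible (x (k - 1)) (c (k + 1)) (x k)) ∧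
  (∀ k, n - 2 < k → x k = 0)

/-- The partial sum `c 1 + ⋯ + c (k + 1)` of the colors to the left of `x k`. -/
def leftSum (c : ℕ → ℕ) (k : ℕ) : ℕ := ∑ i ∈ Finset.Icc 1 (k + 1), c i

lemma leftSum_zero (c : ℕ → ℕ) : leftSum c 0 = c 1 := by simp [leftSum]

lemma leftSum_succ (c : ℕ → ℕ) (k : ℕ) : leftSum c (k + 1) = leftSum c k + c (k + 2) := by
  unfold leftSum
  rw [Finset.sum_Icc_succ_top (by omega)]

lemma leftSum_mono (c : ℕ → ℕ) : Monotone (leftSum c) :=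
  monotone_nat_of_le_succ fun k => by rw [leftSum_succ]; omega

lemma eq_sum_erase_iff (c : ℕ → ℕ) (N m : ℕ) (h1 : 1 ≤ m) (h2 : m ≤ N + 2) :
    c m = ∑ i ∈ (Finset.Icc 1 (N + 2)).erase m, c i ↔ 2 * c m = leftSum c (N + 1) := by
  have h := Finset.add_sum_erase (Finset.Icc 1 (N + 2)) c (Finset.mem_Icc.2 ⟨h1, h2⟩)
  have h' : leftSum c (N + 1) = ∑ i ∈ Finset.Icc 1 (N + 2), c i := rfl
  omega

lemma isFusionPath_iff (N : ℕ) (c x : ℕ → ℕ) :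
    IsFusionPath (N + 2) c x ↔ x 0 = c 1 ∧ x N = c (N + 2) ∧
      (∀ k < N, Admissible (x k) (c (k + 2)) (x (k + 1))) ∧ ∀ k, N < k → x k = 0 := by
  unfold IsFusionPath
  simp only [Nat.add_sub_cancel]
  refine and_congr_right fun _ => and_congr_right fun _ => and_congr_left fun _ => ?_
  constructor
  · intro h k hk
    simpa using h (k + 1) (by omega) (by omega)
  · intro h k h1 h2
    obtain ⟨j, rfl⟩ : ∃ j, k = j + 1 := ⟨k - 1, by omega⟩
    simpa using h j (by omega)

/-- The triangle inequalities accumulated from the left end of a path. -/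
lemma bounds_left (N : ℕ) (c x : ℕ → ℕ) (h0 : x 0 = c 1)
    (hx : ∀ k < N, Admissible (x k) (c (k + 2)) (x (k + 1))) (k : ℕ) (hk : k ≤ N) :
    x k ≤ leftSum c k ∧ ∀ m, 1 ≤ m → m ≤ k + 1 → 2 * c m ≤ x k + leftSum c k := by
  induction k with
  | zero =>
    rw [leftSum_zero]
    refine ⟨h0.le, fun m h1 h2 => ?_⟩
    obtain rfl : m = 1 := by omega
    omega
  | succ k ih =>
    obtain ⟨ih1, ih2⟩ := ih (by omega)
    obtain ⟨a1, a2, a3, -⟩ := hx k (by omega)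
    rw [leftSum_succ]
    refine ⟨by omega, fun m h1 h2 => ?_⟩
    rcases Nat.lt_or_ge (k + 1) m with h | h
    · obtain rfl : m = k + 2 := by omega
      omega
    · have := ih2 m h1 h
      omega

/-- The triangle inequalities accumulated from the right end of a path. The sum of the colors to
the right of `x k` is written as the total `leftSum c (N + 1)` minus `leftSum c k`. -/
lemma bounds_right (N : ℕ) (c x : ℕ → ℕ) (hN : x N = c (N + 2))
    (hx : ∀ k < N, Admissible (x k) (c (k + 2)) (x (k + 1))) (k : ℕ) (hk : k ≤ N) :
    x k + leftSum c k ≤ leftSum c (N + 1) ∧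
      ∀ m, k + 2 ≤ m → m ≤ N + 2 → 2 * c m + leftSum c k ≤ x k + leftSum c (N + 1) := by
  induction hk using Nat.decreasingInduction with
  | self =>
    have := leftSum_succ c N
    refine ⟨by omega, fun m h1 h2 => ?_⟩
    obtain rfl : m = N + 2 := by omega
    omega
  | of_succ k hk ih =>
    obtain ⟨ih1, ih2⟩ := ih
    obtain ⟨a1, a2, a3, -⟩ := hx k hk
    have := leftSum_succ c k
    refine ⟨by omega, fun m h1 h2 => ?_⟩
    rcases Nat.lt_or_ge m (k + 3) with h | h
    · obtain rfl : m = k + 2 := by omega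
      omega
    · have := ih2 m h h2
      omega

/-- The only candidate for a path when `2 * c m` is the sum of all colors: `x k` is the sum of the
colors on the side of `x k` that does not contain `c m`. -/
def extremalPath (N m : ℕ) (c : ℕ → ℕ) (k : ℕ) : ℕ :=
  if N < k then 0 else if m ≤ k + 1 then leftSum c (N + 1) - leftSum c k else leftSum c k

lemma isFusionPath_extremal (N m : ℕ) (c : ℕ → ℕ) (h1 : 1 ≤ m) (h2 : m ≤ N + 2)
    (h : 2 * c m = leftSum c (N + 1)) : IsFusionPath (N + 2) c (extremalPath N m c) := by
  rw [isFusionPath_iff]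
  have hN := leftSum_succ c N
  refine ⟨?_, ?_, fun k hk => ?_, fun k hk => by simp [extremalPath, hk]⟩
  · have := leftSum_zero c
    by_cases hm : m ≤ 1
    · obtain rfl : m = 1 := by omega
      simp [extremalPath]
      omega
    · simp [extremalPath, hm, this]
  · by_cases hm : m ≤ N + 1
    · simp [extremalPath, hm]
      omega
    · obtain rfl : m = N + 2 := by omega
      simp [extremalPath]
      omega
  · have hk1 := leftSum_succ c k
    have hT : leftSum c (k + 1) ≤ leftSum c (N + 1) := leftSum_mono c (by omega)
    have e1 : ¬ N < k := by omega
    have e2 : ¬ N < k + 1 := by omega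
    simp only [extremalPath, e1, e2, if_false, Admissible, Nat.even_iff]
    obtain hm | rfl | hm := lt_trichotomy m (k + 2)
    all_goals split_ifs <;> omega

/-- If `y` is the only value completing two triangles `(a, p, y)` and `(y, q, b)` and the colors
`p`, `q` are positive, then `y` is positive, and it is maximal for one of the triangles and minimal
for the other; when `a` and `b` are positive as well, these two extremal values are as listed. -/
lemma local_dichotomy (a p y q b : ℕ) (hp : 0 < p) (hq : 0 < q)
    (h1 : Admissible a p y) (h2 : Admissible y q b)
    (hu : ∀ z, Admissible a p z → Admissible z q b → z = y) :
    0 < y ∧ (0 < a → 0 < b →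
      (y = a + p ∧ (b = y + q ∨ q = y + b)) ∨ (y = q + b ∧ (a = y + p ∨ p = a + y))) := by
  have hup := hu (y + 2)
  have hdown := hu (y - 2)
  simp only [Admissible, Nat.even_iff] at *
  omega

/-- Along the only path, each interior value is the only one completing its two triangles. -/
lemma unique_local (N : ℕ) (c x : ℕ → ℕ) (hx : IsFusionPath (N + 2) c x)
    (hu : ∀ x', IsFusionPath (N + 2) c x' → x' = x) (k : ℕ) (hk : k + 2 ≤ N) (z : ℕ)
    (hz1 : Admissible (x k) (c (k + 2)) z) (hz2 : Admissible z (c (k + 3)) (x (k + 2))) :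
    z = x (k + 1) := by
  have key : IsFusionPath (N + 2) c (Function.update x (k + 1) z) := by
    rw [isFusionPath_iff] at hx ⊢
    obtain ⟨g0, gN, gx, gz⟩ := hx
    refine ⟨by simpa using g0, ?_, fun j hj => ?_, fun j hj => ?_⟩
    · rwa [Function.update_of_ne (by omega)]
    · rcases eq_or_ne j k with rfl | hjk
      · simpa using hz1
      · rcases eq_or_ne j (k + 1) with rfl | hjk'
        · simpa using hz2
        · rw [Function.update_of_ne hjk', Function.update_of_ne (by omega)]
          exact gx j hj
    · rw [Function.update_of_ne (by omega)]
      exact gz j hj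
  simpa using congrFun (hu _ key) (k + 1)

lemma exists_of_unique (N : ℕ) (hN : 2 ≤ N) (c x : ℕ → ℕ)
    (hc : ∀ i, 1 ≤ i → i ≤ N + 2 → 0 < c i) (hx : IsFusionPath (N + 2) c x)
    (hu : ∀ x', IsFusionPath (N + 2) c x' → x' = x) :
    ∃ m, 1 ≤ m ∧ m ≤ N + 2 ∧ 2 * c m = leftSum c (N + 1) := by
  obtain ⟨g0, gN, gx, -⟩ := (isFusionPath_iff N c x).1 hx
  have hloc : ∀ k, k + 2 ≤ N → _ := fun k hk =>
    local_dichotomy (x k) (c (k + 2)) (x (k + 1)) (c (k + 3)) (x (k + 2))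
      (hc _ (by omega) (by omega)) (hc _ (by omega) (by omega))
      (gx k (by omega)) (gx (k + 1) (by omega)) (unique_local N c x hx hu k hk)
  have hpos : ∀ k ≤ N, 0 < x k := by
    intro k hk
    rcases Nat.eq_zero_or_pos k with rfl | h
    · rw [g0]; exact hc 1 (by omega) (by omega)
    · rcases hk.eq_or_lt with rfl | h'
      · rw [gN]; exact hc _ (by omega) (by omega)
      · obtain ⟨j, rfl⟩ : ∃ j, k = j + 1 := ⟨k - 1, by omega⟩
        exact (hloc j (by omega)).1
  -- Either every triangle so far has its last side as the sum of the others, or some color `c m`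
  -- already balances everything to the left of `x (k + 1)` and the last triangle is not of that
  -- kind.
  have hinv : ∀ k, k + 1 ≤ N →
      (x (k + 1) = leftSum c (k + 1) ∧ x (k + 1) = x k + c (k + 2)) ∨
      ((∃ m, 1 ≤ m ∧ m ≤ k + 2 ∧ 2 * c m = leftSum c (k + 1) + x (k + 1)) ∧
        x (k + 1) ≠ x k + c (k + 2)) := by
    intro k hk
    induction k with
    | zero =>
      have hl := (hloc 0 (by omega)).2 (hpos _ (by omega)) (hpos _ (by omega))
      have hs := leftSum_succ c 0
      have hz := leftSum_zero c
      have p0 := hpos 0 (by omega)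
      have p1 := hpos 1 (by omega)
      have q2 := hc 2 (by omega) (by omega)
      simp only [zero_add] at *
      rcases hl with ⟨e, -⟩ | ⟨-, e | e⟩
      · exact Or.inl ⟨by omega, e⟩
      · exact Or.inr ⟨⟨1, le_rfl, by omega, by omega⟩, by omega⟩
      · exact Or.inr ⟨⟨2, by omega, by omega, by omega⟩, by omega⟩
    | succ k ih =>
      have hl := (hloc k (by omega)).2 (hpos _ (by omega)) (hpos _ (by omega))
      have hs : leftSum c (k + 2) = leftSum c (k + 1) + c (k + 3) := leftSum_succ c (k + 1)
      have p0 := hpos k (by omega)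
      have p1 := hpos (k + 1) (by omega)
      have p2 := hpos (k + 2) (by omega)
      have q2 := hc (k + 2) (by omega) (by omega)
      have q3 := hc (k + 3) (by omega) (by omega)
      change (x (k + 2) = leftSum c (k + 2) ∧ x (k + 2) = x (k + 1) + c (k + 3)) ∨
        ((∃ m, 1 ≤ m ∧ m ≤ k + 3 ∧ 2 * c m = leftSum c (k + 2) + x (k + 2)) ∧
          x (k + 2) ≠ x (k + 1) + c (k + 3))
      rcases ih (by omega) with ⟨i1, i2⟩ | ⟨⟨m, m1, m2, m3⟩, i2⟩
      · rcases hl with ⟨-, e | e⟩ | ⟨-, e | e⟩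
        · exact Or.inl ⟨by omega, e⟩
        · exact Or.inr ⟨⟨k + 3, by omega, by omega, by omega⟩, by omega⟩
        · omega
        · omega
      · rcases hl with ⟨e, -⟩ | ⟨e, -⟩
        · omega
        · exact Or.inr ⟨⟨m, m1, by omega, by omega⟩, by omega⟩
  obtain ⟨M, rfl⟩ : ∃ M, N = M + 1 := ⟨N - 1, by omega⟩
  have hs := leftSum_succ c (M + 1)
  rcases hinv M le_rfl with ⟨e, -⟩ | ⟨⟨m, m1, m2, m3⟩, -⟩
  · exact ⟨M + 1 + 2, by omega, le_rfl, by omega⟩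
  · exact ⟨m, m1, by omega, by omega⟩

theorem stmt14 (n : ℕ) (hn : 4 ≤ n) (c : ℕ → ℕ) (hc : ∀ i, 1 ≤ i → i ≤ n → 0 < c i) :
    Set.ncard {x : ℕ → ℕ | IsFusionPath n c x} = 1 ↔
      ∃ m, 1 ≤ m ∧ m ≤ n ∧ c m = ∑ i ∈ (Finset.Icc 1 n).erase m, c i := by
  obtain ⟨N, rfl⟩ : ∃ N, n = N + 2 := ⟨n - 2, by omega⟩
  rw [Set.ncard_eq_one]
  constructor
  · rintro ⟨x, hS⟩
    have hx : IsFusionPath (N + 2) c x := by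
      have : x ∈ {x : ℕ → ℕ | IsFusionPath (N + 2) c x} := hS ▸ Set.mem_singleton x
      exact this
    have hu : ∀ x', IsFusionPath (N + 2) c x' → x' = x := by
      intro x' hx'
      have : x' ∈ ({x} : Set (ℕ → ℕ)) := hS ▸ hx'
      exact this
    obtain ⟨m, h1, h2, h3⟩ := exists_of_unique N (by omega) c x hc hx hu
    exact ⟨m, h1, h2, (eq_sum_erase_iff c N m h1 h2).2 h3⟩
  · rintro ⟨m, h1, h2, h3⟩
    rw [eq_sum_erase_iff c N m h1 h2] at h3
    refine ⟨extremalPath N m c, Set.eq_singleton_iff_unique_mem.2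
      ⟨isFusionPath_extremal N m c h1 h2 h3, fun x hx => ?_⟩⟩
    obtain ⟨g0, gN, gx, gz⟩ := (isFusionPath_iff N c x).1 hx
    funext k
    unfold extremalPath
    split_ifs with hk hm
    · exact gz k hk
    · have hl := (bounds_left N c x g0 gx k (by omega)).2 m h1 hm
      have hr := (bounds_right N c x gN gx k (by omega)).1
      omega
    · have hl := (bounds_left N c x g0 gx k (by omega)).1
      have hr := (bounds_right N c x gN gx k (by omega)).2 m (by omega) h2
      omega
end

section
/- Let n ≥ 5 and let c₁, …, c_n be positive integers. Let N(c₁,…,c_n) denote the number of admissible fusion paths for (c₁,…,c_n), i.e. sequences (x₀, x₁, …, x_{n−2}) of nonnegative integers with x₀ = c₁ and x_{n−2} = c_n such that for each k = 1, …, n−2 the triple (x_{k−1}, c_{k+1}, x_k) is admissible (|x_{k−1} − c_{k+1}| ≤ x_k ≤ x_{k−1} + c_{k+1} and x_{k−1} + c_{k+1} + x_k even). Then N(c₁,…,c_n) ≠ 2. -/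
/-- Fusion paths of length `m` from `A` to `B` whose `k`-th step, from `x k` to `x (k + 1)`, has
colour `d k`; the values beyond `m` are normalized to `0`. -/
def IsPath (m A B : ℕ) (d x : ℕ → ℕ) : Prop :=
  x 0 = A ∧ x m = B ∧ (∀ k, k < m → Admissible (x k) (d k) (x (k + 1))) ∧ ∀ k, m < k → x k = 0

theorem admissible_iff (i j k : ℕ) :
    Admissible i j k ↔ k ≤ i + j ∧ i ≤ j + k ∧ j ≤ i + k ∧ (i + j + k) % 2 = 0 := by
  rw [Admissible, Nat.even_iff]

theorem Admissible.swap {i j k : ℕ} (h : Admissible i j k) : Admissible k j i := by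
  rw [admissible_iff] at *
  omega

theorem isFusionPath_iff_s15 (n : ℕ) (c x : ℕ → ℕ) :
    IsFusionPath n c x ↔ IsPath (n - 2) (c 1) (c n) (fun k => c (k + 2)) x := by
  unfold IsFusionPath IsPath
  refine and_congr_right fun _ => and_congr_right fun _ => and_congr_left fun _ => ?_
  constructor
  · intro h k hk
    exact h (k + 1) (by omega) (by omega)
  · intro h k h1 hk
    obtain ⟨j, rfl⟩ : ∃ j, k = j + 1 := ⟨k - 1, by omega⟩
    exact h j (by omega)

variable {m A B : ℕ} {d x y : ℕ → ℕ}

theorem IsPath.parity (hx : IsPath m A B d x) (hy : IsPath m A B d y) (k : ℕ) :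
    x k % 2 = y k % 2 := by
  rcases lt_or_ge m k with h | h
  · rw [hx.2.2.2 k h, hy.2.2.2 k h]
  · induction k with
    | zero => rw [hx.1, hy.1]
    | succ k ih =>
      have h1 := hx.2.2.1 k h
      have h2 := hy.2.2.1 k h
      have := ih (by omega)
      rw [admissible_iff] at h1 h2
      omega

theorem IsPath.max (hx : IsPath m A B d x) (hy : IsPath m A B d y) :
    IsPath m A B d (fun k => Nat.max (x k) (y k)) := by
  refine ⟨by simp [hx.1, hy.1], by simp [hx.2.1, hy.2.1], fun k hk => ?_,
    fun k hk => by simp [hx.2.2.2 k hk, hy.2.2.2 k hk]⟩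
  have h1 := hx.2.2.1 k hk
  have h2 := hy.2.2.1 k hk
  have h3 := hx.parity hy k
  have h4 := hx.parity hy (k + 1)
  rw [admissible_iff] at *
  simp only [Nat.max_def]
  split_ifs <;> omega

/-- For paths `x ≤ y`, raising `x` by `2` wherever it lies below `y` gives a path; by parity, it
still lies below `y`. -/
theorem IsPath.raise (hx : IsPath m A B d x) (hy : IsPath m A B d y) (hle : ∀ k, x k ≤ y k) :
    IsPath m A B d (fun k => if x k < y k then x k + 2 else x k) := by
  refine ⟨by simp [hx.1, hy.1], by simp [hx.2.1, hy.2.1], fun k hk => ?_,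
    fun k hk => by simp [hx.2.2.2 k hk, hy.2.2.2 k hk]⟩
  have h1 := hx.2.2.1 k hk
  have h2 := hy.2.2.1 k hk
  have h3 := hx.parity hy k
  have h4 := hx.parity hy (k + 1)
  have h5 := hle k
  have h6 := hle (k + 1)
  rw [admissible_iff] at *
  dsimp only
  split_ifs <;> omega

theorem IsPath.glue (hx : IsPath m A B d x) (hy : IsPath m A B d y) {a : ℕ} (ha : a < m)
    (h : Admissible (x a) (d a) (y (a + 1))) :
    IsPath m A B d (fun k => if k ≤ a then x k else y k) := by
  refine ⟨by simp [hx.1], by simp [hy.2.1, ha], fun k hk => ?_, fun k hk => ?_⟩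
  · dsimp only
    rcases lt_trichotomy k a with h1 | rfl | h1
    · rw [if_pos (by omega), if_pos (by omega)]
      exact hx.2.2.1 k hk
    · rw [if_pos le_rfl, if_neg (by omega)]
      exact h
    · rw [if_neg (by omega), if_neg (by omega)]
      exact hy.2.2.1 k hk
  · dsimp only
    rw [if_neg (by omega)]
    exact hy.2.2.2 k hk

theorem IsPath.replace_two (hx : IsPath m A B d x) {i u v : ℕ} (hi : i + 3 ≤ m)
    (h1 : Admissible (x i) (d i) u) (h2 : Admissible u (d (i + 1)) v)
    (h3 : Admissible v (d (i + 2)) (x (i + 3))) :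
    IsPath m A B d (fun k => if k = i + 1 then u else if k = i + 2 then v else x k) := by
  refine ⟨by simp [hx.1], ?_, fun k hk => ?_, fun k hk => ?_⟩
  · dsimp only
    rw [if_neg (by omega), if_neg (by omega)]
    exact hx.2.1
  · have := hx.2.2.1 k hk
    dsimp only
    by_cases e1 : k = i
    · subst e1; simpa using h1
    by_cases e2 : k = i + 1
    · subst e2; simpa using h2
    by_cases e3 : k = i + 2
    · subst e3; simpa using h3
    rw [if_neg (by omega), if_neg (by omega), if_neg (by omega), if_neg (by omega)]
    exact this
  · dsimp only
    rw [if_neg (by omega), if_neg (by omega)]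
    exact hx.2.2.2 k hk

theorem IsPath.replace_one (hx : IsPath m A B d x) {i u : ℕ} (hi : i + 2 ≤ m)
    (h1 : Admissible (x i) (d i) u) (h2 : Admissible u (d (i + 1)) (x (i + 2))) :
    IsPath m A B d (fun k => if k = i + 1 then u else x k) := by
  refine ⟨by simp [hx.1], ?_, fun k hk => ?_, fun k hk => ?_⟩
  · dsimp only
    rw [if_neg (by omega)]
    exact hx.2.1
  · have := hx.2.2.1 k hk
    dsimp only
    by_cases e1 : k = i
    · subst e1; simpa using h1
    by_cases e2 : k = i + 1
    · subst e2; simpa using h2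
    rw [if_neg (by omega), if_neg (by omega)]
    exact this
  · dsimp only
    rw [if_neg (by omega)]
    exact hx.2.2.2 k hk

/-- An interior colour `0` can be replaced by `2`: both neighbours equal the colours of the
adjacent boundary components, which are positive. -/
theorem IsPath.bump_zero (hx : IsPath m A B d x) (hd : ∀ k, k < m → 0 < d k) {i : ℕ}
    (hi : i + 2 ≤ m) (h0 : x (i + 1) = 0) :
    IsPath m A B d (fun k => if k = i + 1 then 2 else x k) := by
  have h1 := hx.2.2.1 i (by omega)
  have h2 : Admissible (x (i + 1)) (d (i + 1)) (x (i + 2)) := hx.2.2.1 (i + 1) (by omega)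
  have h3 := hd i (by omega)
  have h4 := hd (i + 1) (by omega)
  rw [h0, admissible_iff] at h1 h2
  apply hx.replace_one hi <;> rw [admissible_iff] <;> omega

/-- If `u` and `u + 2` both fit between `p` and `v`, and the other neighbour `w` of `v` is
positive, then `v` can be changed, possibly together with `u`. -/
theorem exists_move {p e₁ u e₂ v e₃ w : ℕ} (hw : 0 < w) (he : 0 < e₃)
    (h1 : Admissible p e₁ u) (h2 : Admissible p e₁ (u + 2))
    (h3 : Admissible u e₂ v) (h4 : Admissible (u + 2) e₂ v) (h5 : Admissible v e₃ w) :
    ∃ u' v', v' ≠ v ∧ Admissible p e₁ u' ∧ Admissible u' e₂ v' ∧ Admissible v' e₃ w := by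
  by_cases hv : v + 2 ≤ w + e₃
  · refine ⟨u + 2, v + 2, by omega, h2, ?_, ?_⟩ <;> rw [admissible_iff] at * <;> omega
  -- Here `v = w + e₃ ≥ 2`, so the obstructions `e₂ = u + v` and `u + 2 = v + e₂` to lowering `v`
  -- next to `u` and next to `u + 2`, which together force `v = 1`, are not both present.
  by_cases hu : e₂ + 2 ≤ u + v
  · refine ⟨u, v - 2, ?_, h1, ?_, ?_⟩ <;> rw [admissible_iff] at * <;> omega
  · refine ⟨u + 2, v - 2, ?_, h2, ?_, ?_⟩ <;> rw [admissible_iff] at * <;> omega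

/-- If `x ≤ y` are the only two paths, they differ by `2` at a single interior position. -/
theorem exists_single_raise (hd : ∀ k, k < m → 0 < d k) (hx : IsPath m A B d x)
    (hy : IsPath m A B d y) (hne : x ≠ y) (hle : ∀ k, x k ≤ y k)
    (H : ∀ z, IsPath m A B d z → z = x ∨ z = y) :
    ∃ a, 0 < a ∧ a < m ∧ y a = x a + 2 ∧ ∀ k, k ≠ a → y k = x k := by
  have hex : ∃ k, x k < y k := by
    by_contra! h
    exact hne (funext fun k => le_antisymm (hle k) (h k))
  have hr : ∀ k, y k = if x k < y k then x k + 2 else x k := by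
    rcases H _ (hx.raise hy hle) with h | h
    · obtain ⟨k, hk⟩ := hex
      have := congrFun h k
      simp [hk] at this
    · exact fun k => (congrFun h k).symm
  obtain ⟨a, ha, hmin⟩ : ∃ a, x a < y a ∧ ∀ k, k < a → ¬ x k < y k :=
    ⟨Nat.find hex, Nat.find_spec hex, fun k hk => Nat.find_min hex hk⟩
  have hya : y a = x a + 2 := by
    rw [hr a, if_pos ha]
  have ha0 : a ≠ 0 := by
    rintro rfl
    rw [hx.1, hy.1] at ha
    omega
  have ham : a < m := by
    by_contra! h
    rcases h.eq_or_lt with rfl | h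
    · rw [hx.2.1, hy.2.1] at ha
      omega
    · rw [hx.2.2.2 a h, hy.2.2.2 a h] at ha
      omega
  have hda := hd a ham
  have h1 := hx.2.2.1 a ham
  have h2 := hy.2.2.1 a ham
  have hs : x (a + 1) = y (a + 1) := by
    by_contra hs
    have hlt : x (a + 1) < y (a + 1) := lt_of_le_of_ne (hle _) hs
    have hys : y (a + 1) = x (a + 1) + 2 := by
      rw [hr (a + 1), if_pos hlt]
    -- One of the two ways to separate positions `a` and `a + 1` is admissible since `d a > 0`.
    by_cases hc : x a = x (a + 1) + d a
    · have hA : Admissible (x a) (d a) (y (a + 1)) := by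
        rw [admissible_iff] at *
        omega
      rcases H _ (hx.glue hy ham hA) with h | h
      · have := congrFun h (a + 1)
        simp at this
        omega
      · have := congrFun h a
        simp at this
        omega
    · have hA : Admissible (y a) (d a) (x (a + 1)) := by
        rw [admissible_iff] at *
        omega
      rcases H _ (hy.glue hx ham hA) with h | h
      · have := congrFun h a
        simp at this
        omega
      · have := congrFun h (a + 1)
        simp at this
        omega
  refine ⟨a, by omega, ham, hya, fun k hk => ?_⟩
  rcases lt_or_gt_of_ne hk with hk | hk
  · exact le_antisymm (not_lt.mp (hmin k hk)) (hle k)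
  · rcases H _ (hy.glue hx ham (by rw [hs]; exact h2)) with h | h
    · have := congrFun h a
      simp at this
      omega
    · have := congrFun h k
      simp only [if_neg (show ¬ k ≤ a by omega)] at this
      exact this.symm

/-- There cannot be exactly two paths if one lies below the other; `exists_move` is applied to the
right of the position where they differ if there is an interior position there, and to its left
otherwise. -/
theorem false_of_two_le (hm : 3 ≤ m) (hA : 0 < A) (hB : 0 < B) (hd : ∀ k, k < m → 0 < d k)
    (hx : IsPath m A B d x) (hy : IsPath m A B d y) (hne : x ≠ y) (hle : ∀ k, x k ≤ y k)
    (H : ∀ z, IsPath m A B d z → z = x ∨ z = y) : False := by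
  obtain ⟨a, ha0, ham, hya, hoff⟩ := exists_single_raise hd hx hy hne hle H
  have hfix : ∀ z, IsPath m A B d z → ∀ k, k ≠ a → z k = x k := by
    intro z hz k hk
    rcases H z hz with rfl | rfl
    · rfl
    · exact hoff k hk
  have hpos : ∀ k, k ≤ m → k ≠ a → x k ≠ 0 := by
    intro k hk hka h0
    have hk0 : k ≠ 0 := by
      rintro rfl
      rw [hx.1] at h0
      omega
    have hkm : k ≠ m := by
      rintro rfl
      rw [hx.2.1] at h0
      omega
    obtain ⟨i, rfl⟩ : ∃ i, k = i + 1 := ⟨k - 1, by omega⟩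
    have := hfix _ (hx.bump_zero hd (by omega) h0) (i + 1) hka
    simp [h0] at this
  by_cases hcase : a + 1 < m
  · obtain ⟨i, rfl⟩ : ∃ i, a = i + 1 := ⟨a - 1, by omega⟩
    have e1 := hy.2.2.1 i (by omega)
    have e2 := hy.2.2.1 (i + 1) (by omega)
    rw [hya, hoff _ (by omega)] at e1 e2
    obtain ⟨u, v, hv, k1, k2, k3⟩ := exists_move
      (Nat.pos_of_ne_zero (hpos (i + 3) (by omega) (by omega))) (hd (i + 2) (by omega))
      (hx.2.2.1 i (by omega)) e1 (hx.2.2.1 (i + 1) (by omega)) e2 (hx.2.2.1 (i + 2) (by omega))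
    have := hfix _ (hx.replace_two (by omega) k1 k2 k3) (i + 2) (by omega)
    simp at this
    exact hv this
  · obtain ⟨i, rfl⟩ : ∃ i, a = i + 2 := ⟨a - 2, by omega⟩
    have e1 := hy.2.2.1 (i + 1) (by omega)
    have e2 := hy.2.2.1 (i + 2) (by omega)
    rw [hya, hoff _ (by omega)] at e1 e2
    obtain ⟨u, v, hv, k1, k2, k3⟩ := exists_move
      (Nat.pos_of_ne_zero (hpos i (by omega) (by omega))) (hd i (by omega))
      (hx.2.2.1 (i + 2) (by omega)).swap e2.swap (hx.2.2.1 (i + 1) (by omega)).swap e1.swap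
      (hx.2.2.1 i (by omega)).swap
    have := hfix _ (hx.replace_two (by omega) k3.swap k2.swap k1.swap) (i + 1) (by omega)
    simp at this
    exact hv this

theorem stmt15 (n : ℕ) (hn : 5 ≤ n) (c : ℕ → ℕ) (hc : ∀ i, 1 ≤ i → i ≤ n → 0 < c i) :
    Set.ncard {x : ℕ → ℕ | IsFusionPath n c x} ≠ 2 := by
  intro h2
  obtain ⟨x, y, hne, hS⟩ := Set.ncard_eq_two.mp h2
  have hmem : ∀ z, IsPath (n - 2) (c 1) (c n) (fun k => c (k + 2)) z ↔ z = x ∨ z = y := by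
    intro z
    rw [← isFusionPath_iff_s15]
    exact Set.ext_iff.mp hS z
  have hx := (hmem x).mpr (Or.inl rfl)
  have hy := (hmem y).mpr (Or.inr rfl)
  have hA := hc 1 le_rfl (by omega)
  have hB := hc n (by omega) le_rfl
  have hd : ∀ k, k < n - 2 → 0 < c (k + 2) := fun k hk => hc _ (by omega) (by omega)
  rcases (hmem _).mp (hx.max hy) with h | h
  · refine false_of_two_le (by omega) hA hB hd hy hx hne.symm (fun k => ?_)
      (fun z hz => ((hmem z).mp hz).symm)
    rw [← congrFun h k]
    exact Nat.le_max_right _ _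
  · refine false_of_two_le (by omega) hA hB hd hx hy hne (fun k => ?_)
      (fun z hz => (hmem z).mp hz)
    rw [← congrFun h k]
    exact Nat.le_max_left _ _
end
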